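/- arXiv:math-ph/0308010 — 9 statements merged into one kernel-verified Lean document; each statement's English description precedes it below -/
import Mathlib

section
/- The energy-type function H(M,N,S) = (1/2)⟨M, I⁻¹M⟩ − ω_O⟨M,N⟩ + (3/2)ω_K²⟨S, IS⟩ − (ξ/2)⟨L,N⟩² is a first integral of the satellite system: for every differentiable solution t ↦ (M(t),N(t),S(t)) of the system, the function t ↦ H(M(t),N(t),S(t)) is constant. -/
noncomputable section

/-- Cross product on ℝ³. -/
def cross3 (a b : Fin 3 → ℝ) : Fin 3 → ℝ :=
  ![a 1 * b 2 - a 2 * b 1, a 2 * b 0 - a 0 * b 2, a 0 * b 1 - a 1 * b 0]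

/-- Euclidean inner product on ℝ³. -/
def dot3 (a b : Fin 3 → ℝ) : ℝ := a 0 * b 0 + a 1 * b 1 + a 2 * b 2

/-- `I v` where `I = diag(A,B,C)`. -/
def inertia (A B C : ℝ) (v : Fin 3 → ℝ) : Fin 3 → ℝ := ![A * v 0, B * v 1, C * v 2]

/-- `I⁻¹ v` where `I = diag(A,B,C)`. -/
def inertiaInv (A B C : ℝ) (v : Fin 3 → ℝ) : Fin 3 → ℝ := ![v 0 / A, v 1 / B, v 2 / C]

/-- Right-hand side for `M' = M×Ω + 3ω_K² S×(IS) + ξ⟨L,N⟩ L×N`, with `Ω = I⁻¹M`. -/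
def rhsM (A B C ωK ξ : ℝ) (L M N S : Fin 3 → ℝ) : Fin 3 → ℝ :=
  cross3 M (inertiaInv A B C M) + (3 * ωK ^ 2) • cross3 S (inertia A B C S)
    + (ξ * dot3 L N) • cross3 L N

/-- Right-hand side for `N' = N×Ω`. -/
def rhsN (A B C : ℝ) (M N : Fin 3 → ℝ) : Fin 3 → ℝ :=
  cross3 N (inertiaInv A B C M)

/-- Right-hand side for `S' = S×(Ω − ω_O N)`. -/
def rhsS (A B C ωO : ℝ) (M N S : Fin 3 → ℝ) : Fin 3 → ℝ :=
  cross3 S (inertiaInv A B C M - ωO • N)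

/-- `(M,N,S) : ℝ → ℝ³×ℝ³×ℝ³` is a (differentiable) solution of the satellite system. -/
def IsSatelliteSolution (A B C ωO ωK ξ : ℝ) (L : Fin 3 → ℝ)
    (M N S : ℝ → Fin 3 → ℝ) : Prop :=
  ∀ t : ℝ, ∀ i : Fin 3,
    HasDerivAt (fun s => M s i) (rhsM A B C ωK ξ L (M t) (N t) (S t) i) t ∧
    HasDerivAt (fun s => N s i) (rhsN A B C (M t) (N t) i) t ∧
    HasDerivAt (fun s => S s i) (rhsS A B C ωO (M t) (N t) (S t) i) t

/-- The energy-type function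
`H = (1/2)⟨M,I⁻¹M⟩ − ω_O⟨M,N⟩ + (3/2)ω_K²⟨S,IS⟩ − (ξ/2)⟨L,N⟩²`. -/
def energyH (A B C ωO ωK ξ : ℝ) (L M N S : Fin 3 → ℝ) : ℝ :=
  (1 / 2) * dot3 M (inertiaInv A B C M) - ωO * dot3 M N
    + (3 / 2) * ωK ^ 2 * dot3 S (inertia A B C S) - (ξ / 2) * (dot3 L N) ^ 2

/-- `H` is a first integral of the satellite system. -/
theorem energy_first_integral (A B C ωO ωK ξ : ℝ)
    (hA : 0 < A) (hB : 0 < B) (hC : 0 < C) (L : Fin 3 → ℝ)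
    (M N S : ℝ → Fin 3 → ℝ)
    (hsol : IsSatelliteSolution A B C ωO ωK ξ L M N S) :
    ∀ t₁ t₂ : ℝ,
      energyH A B C ωO ωK ξ L (M t₁) (N t₁) (S t₁)
        = energyH A B C ωO ωK ξ L (M t₂) (N t₂) (S t₂) := by
  have key : ∀ t : ℝ, HasDerivAt
      (fun s => energyH A B C ωO ωK ξ L (M s) (N s) (S s)) 0 t := by
    intro t
    obtain ⟨m0, n0, s0⟩ := hsol t 0
    obtain ⟨m1, n1, s1⟩ := hsol t 1
    obtain ⟨m2, n2, s2⟩ := hsol t 2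
    have hMM := ((m0.mul (m0.div_const A)).add (m1.mul (m1.div_const B))).add
      (m2.mul (m2.div_const C))
    have hMN := ((m0.mul n0).add (m1.mul n1)).add (m2.mul n2)
    have hSS := ((s0.mul (s0.const_mul A)).add (s1.mul (s1.const_mul B))).add
      (s2.mul (s2.const_mul C))
    have hLN := ((n0.const_mul (L 0)).add (n1.const_mul (L 1))).add (n2.const_mul (L 2))
    have h := (((hMM.const_mul (1 / 2)).sub (hMN.const_mul ωO)).add
      (hSS.const_mul ((3 / 2) * ωK ^ 2))).sub ((hLN.pow 2).const_mul (ξ / 2))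
    refine HasDerivAt.congr_deriv (f := fun s => energyH A B C ωO ωK ξ L (M s) (N s) (S s)) h ?_
    simp [rhsM, rhsN, rhsS, cross3, dot3, inertia, inertiaInv]
    field_simp
    ring
  exact is_const_of_deriv_eq_zero (fun t => (key t).differentiableAt) (fun t => (key t).deriv)
end
end

section
/- For an axially symmetric satellite with A = B and magnetic axis L = (0,0,1), the third component M₃ of the angular momentum is a first integral of the satellite system: along every differentiable solution t ↦ (M(t),N(t),S(t)), the function t ↦ M₃(t) is constant. -/
noncomputable section

/-- for an axially symmetric satellite (`A = B`) with magnetic axis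
`L = (0,0,1)`, the third component `M₃` of the angular momentum is a first integral. -/
theorem M3_first_integral (A B C ωO ωK ξ : ℝ)
    (hA : 0 < A) (hB : 0 < B) (hC : 0 < C) (hAB : A = B)
    (M N S : ℝ → Fin 3 → ℝ)
    (hsol : IsSatelliteSolution A B C ωO ωK ξ ![0, 0, 1] M N S) :
    ∀ t₁ t₂ : ℝ, M t₁ 2 = M t₂ 2 := by
  subst hAB
  have h : ∀ t, HasDerivAt (fun s => M s 2) 0 t := by
    intro t
    have h1 := (hsol t 2).1
    have h2 : rhsM A A C ωK ξ ![0, 0, 1] (M t) (N t) (S t) 2 = 0 := by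
      simp [rhsM, cross3, inertia, inertiaInv, dot3]
      ring
    rwa [h2] at h1
  intro t₁ t₂
  exact is_const_of_deriv_eq_zero (fun t => (h t).differentiableAt) (fun t => (h t).deriv) t₁ t₂
end
end

section
/- For a spherically symmetric satellite, A = B = C, the functions H₅(M,N,S) = ⟨M,N⟩ and H₆(M,N,S) = ⟨M,L⟩ are first integrals of the satellite system: both are constant along every differentiable solution t ↦ (M(t),N(t),S(t)). -/
noncomputable section

/-- for a spherically symmetric satellite (`A = B = C`),
`H₅ = ⟨M,N⟩` and `H₆ = ⟨M,L⟩` are first integrals of the satellite system. -/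
theorem spherical_first_integrals (A B C ωO ωK ξ : ℝ)
    (hA : 0 < A) (hB : 0 < B) (hC : 0 < C) (hAB : A = B) (hBC : B = C)
    (L : Fin 3 → ℝ) (M N S : ℝ → Fin 3 → ℝ)
    (hsol : IsSatelliteSolution A B C ωO ωK ξ L M N S) :
    ∀ t₁ t₂ : ℝ,
      dot3 (M t₁) (N t₁) = dot3 (M t₂) (N t₂) ∧
      dot3 (M t₁) L = dot3 (M t₂) L := by
  subst hAB hBC
  have key : ∀ f : ℝ → ℝ, (∀ t, HasDerivAt f 0 t) → ∀ a b, f a = f b := fun f hf =>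
    is_const_of_deriv_eq_zero (fun t => (hf t).differentiableAt) (fun t => (hf t).deriv)
  intro t₁ t₂
  constructor
  · refine key (fun t => dot3 (M t) (N t)) (fun t => ?_) t₁ t₂
    have h := (((hsol t 0).1.mul (hsol t 0).2.1).add ((hsol t 1).1.mul (hsol t 1).2.1)).add
      ((hsol t 2).1.mul (hsol t 2).2.1)
    refine HasDerivAt.congr_deriv (f := fun t => dot3 (M t) (N t)) h ?_
    simp [rhsM, rhsN, cross3, inertia, inertiaInv, dot3]
    ring
  · refine key (fun t => dot3 (M t) L) (fun t => ?_) t₁ t₂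
    have h := (((hsol t 0).1.mul_const (L 0)).add ((hsol t 1).1.mul_const (L 1))).add
      ((hsol t 2).1.mul_const (L 2))
    refine HasDerivAt.congr_deriv (f := fun t => dot3 (M t) L) h ?_
    simp [rhsM, cross3, inertia, inertiaInv, dot3]
    ring
end
end

section
/- The satellite system is Hamiltonian with respect to the bracket {·,·}: for the Hamiltonian H(M,N,S) = (1/2)⟨M, I⁻¹M⟩ − ω_O⟨M,N⟩ + (3/2)ω_K²⟨S, IS⟩ − (ξ/2)⟨L,N⟩², one has at every point (M,N,S) ∈ ℝ⁹ and for each i = 1,2,3: {Mᵢ, H} equals the i-th component of M×Ω + 3ω_K² S×(IS) + ξ⟨L,N⟩ L×N, {Nᵢ, H} equals the i-th component of N×Ω, and {Sᵢ, H} equals the i-th component of S×(Ω − ω_O N), where Ω = I⁻¹M. -/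
noncomputable section

/-- Gradient with respect to the block `M` of a function `F(M,N,S)`. -/
def gradM (F : (Fin 3 → ℝ) → (Fin 3 → ℝ) → (Fin 3 → ℝ) → ℝ)
    (M N S : Fin 3 → ℝ) : Fin 3 → ℝ :=
  fun i => deriv (fun x : ℝ => F (Function.update M i x) N S) (M i)

/-- Gradient with respect to the block `N` of a function `F(M,N,S)`. -/
def gradN (F : (Fin 3 → ℝ) → (Fin 3 → ℝ) → (Fin 3 → ℝ) → ℝ)
    (M N S : Fin 3 → ℝ) : Fin 3 → ℝ :=
  fun i => deriv (fun x : ℝ => F M (Function.update N i x) S) (N i)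

/-- Gradient with respect to the block `S` of a function `F(M,N,S)`. -/
def gradS (F : (Fin 3 → ℝ) → (Fin 3 → ℝ) → (Fin 3 → ℝ) → ℝ)
    (M N S : Fin 3 → ℝ) : Fin 3 → ℝ :=
  fun i => deriv (fun x : ℝ => F M N (Function.update S i x)) (S i)

/-- The Poisson bracket
`{F,G} = −⟨M, ∇_M F×∇_M G⟩ − ⟨N, ∇_M F×∇_N G − ∇_M G×∇_N F⟩ − ⟨S, ∇_M F×∇_S G − ∇_M G×∇_S F⟩`. -/
def pbracket (F G : (Fin 3 → ℝ) → (Fin 3 → ℝ) → (Fin 3 → ℝ) → ℝ)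
    (M N S : Fin 3 → ℝ) : ℝ :=
  - dot3 M (cross3 (gradM F M N S) (gradM G M N S))
  - dot3 N (cross3 (gradM F M N S) (gradN G M N S) - cross3 (gradM G M N S) (gradN F M N S))
  - dot3 S (cross3 (gradM F M N S) (gradS G M N S) - cross3 (gradM G M N S) (gradS F M N S))

theorem deriv_quad_aux (f : ℝ → ℝ) (a b c x : ℝ) (h : ∀ y, f y = a * y ^ 2 + b * y + c) :
    deriv f x = 2 * a * x + b := by
  have hf : f = fun y => a * y ^ 2 + b * y + c := funext h
  have h1 : HasDerivAt (fun y : ℝ => a * y ^ 2 + b * y + c) (a * (2 * x) + b * 1) x := by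
    simpa using ((((hasDerivAt_id x).pow 2).const_mul a).add
      ((hasDerivAt_id x).const_mul b)).add_const c
  rw [hf, h1.deriv]; ring

/-- A quadratic function is determined by three values. -/
theorem deriv_quad_aux2 (f : ℝ → ℝ) (x : ℝ)
    (h : ∀ y, f y = ((f 1 + f (-1)) / 2 - f 0) * y ^ 2 + ((f 1 - f (-1)) / 2) * y + f 0) :
    deriv f x = 2 * ((f 1 + f (-1)) / 2 - f 0) * x + (f 1 - f (-1)) / 2 :=
  deriv_quad_aux f _ _ _ x h

theorem gradM_energyH (A B C ωO ωK ξ : ℝ) (L M N S : Fin 3 → ℝ) :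
    gradM (energyH A B C ωO ωK ξ L) M N S = inertiaInv A B C M - ωO • N := by
  funext i
  unfold gradM
  rw [deriv_quad_aux2]
  · fin_cases i <;> simp [energyH, dot3, inertiaInv, inertia, Function.update] <;> ring
  · intro y
    fin_cases i <;> simp [energyH, dot3, inertiaInv, inertia, Function.update] <;> ring

theorem gradN_energyH (A B C ωO ωK ξ : ℝ) (L M N S : Fin 3 → ℝ) :
    gradN (energyH A B C ωO ωK ξ L) M N S = - (ωO • M) - (ξ * dot3 L N) • L := by
  funext i
  unfold gradN
  rw [deriv_quad_aux2]
  · fin_cases i <;> simp [energyH, dot3, inertiaInv, inertia, Function.update] <;> ring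
  · intro y
    fin_cases i <;> simp [energyH, dot3, inertiaInv, inertia, Function.update] <;> ring

theorem gradS_energyH (A B C ωO ωK ξ : ℝ) (L M N S : Fin 3 → ℝ) :
    gradS (energyH A B C ωO ωK ξ L) M N S = (3 * ωK ^ 2) • inertia A B C S := by
  funext i
  unfold gradS
  rw [deriv_quad_aux2]
  · fin_cases i <;> simp [energyH, dot3, inertiaInv, inertia, Function.update] <;> ring
  · intro y
    fin_cases i <;> simp [energyH, dot3, inertiaInv, inertia, Function.update] <;> ring

theorem deriv_coord_aux (M : Fin 3 → ℝ) (i j : Fin 3) (x : ℝ) :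
    deriv (fun x : ℝ => Function.update M j x i) x = if i = j then 1 else 0 := by
  by_cases h : i = j
  · subst h; simp
  · simp [h]

/-- the satellite system is Hamiltonian with respect to the bracket:
`{Mᵢ,H}`, `{Nᵢ,H}`, `{Sᵢ,H}` are the components of the satellite vector field. -/
theorem satellite_is_hamiltonian (A B C ωO ωK ξ : ℝ)
    (hA : 0 < A) (hB : 0 < B) (hC : 0 < C) (L : Fin 3 → ℝ) :
    ∀ (M N S : Fin 3 → ℝ) (i : Fin 3),
      pbracket (fun M _ _ => M i) (energyH A B C ωO ωK ξ L) M N S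
        = rhsM A B C ωK ξ L M N S i ∧
      pbracket (fun _ N _ => N i) (energyH A B C ωO ωK ξ L) M N S
        = rhsN A B C M N i ∧
      pbracket (fun _ _ S => S i) (energyH A B C ωO ωK ξ L) M N S
        = rhsS A B C ωO M N S i := by
  intro M N S i
  unfold pbracket
  rw [gradM_energyH, gradN_energyH, gradS_energyH]
  unfold gradM gradN gradS
  simp only [deriv_coord_aux, deriv_const]
  refine ⟨?_, ?_, ?_⟩
  · fin_cases i <;> simp [rhsM, dot3, cross3, inertiaInv, inertia] <;> ring
  · fin_cases i <;> simp [rhsN, dot3, cross3, inertiaInv] <;> ring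
  · fin_cases i <;> simp [rhsS, dot3, cross3, inertiaInv] <;> ring
end
end

section
/- The functions H₂(M,N.S) = ⟨S,S⟩, H₃(M,N,S) = ⟨N,N⟩ and H₄(M,N,S) = ⟨N,S⟩ are Casimir functions of the bracket {·,·}: for every smooth function F: ℝ⁹ → ℝ and every point (M,N,S) ∈ ℝ⁹, {F, H₂}(M,N,S) = {F, H₃}(M,N,S) = {F, H₄}(M,N,S) = 0. -/
noncomputable section

theorem deriv_dot_self (V : Fin 3 → ℝ) (i : Fin 3) :
    deriv (fun x : ℝ => dot3 (Function.update V i x) (Function.update V i x)) (V i)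
      = 2 * V i := by
  have h : ∀ c : ℝ, HasDerivAt (fun x : ℝ => x * x + c) (2 * V i) (V i) := by
    intro c
    have := ((hasDerivAt_id' (V i)).mul (hasDerivAt_id' (V i))).add_const c
    exact this.congr_deriv (by ring)
  have e : (fun x : ℝ => dot3 (Function.update V i x) (Function.update V i x))
      = fun x => x * x + (dot3 V V - V i * V i) := by
    funext x
    fin_cases i <;> simp [dot3, Function.update] <;> ring
  rw [e]
  exact (h _).deriv

theorem deriv_dot_left (V W : Fin 3 → ℝ) (i : Fin 3) :
    deriv (fun x : ℝ => dot3 (Function.update V i x) W) (V i) = W i := by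
  have e : (fun x : ℝ => dot3 (Function.update V i x) W)
      = fun x => x * W i + (dot3 V W - V i * W i) := by
    funext x
    fin_cases i <;> simp [dot3, Function.update] <;> ring
  rw [e]
  simpa using (((hasDerivAt_id (V i)).mul_const (W i)).add_const (dot3 V W - V i * W i)).deriv

theorem deriv_dot_right (V W : Fin 3 → ℝ) (i : Fin 3) :
    deriv (fun x : ℝ => dot3 W (Function.update V i x)) (V i) = W i := by
  have e : (fun x : ℝ => dot3 W (Function.update V i x))
      = fun x => dot3 (Function.update V i x) W := by
    funext x
    simp only [dot3]; ring
  rw [e, deriv_dot_left]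

/-- `H₂ = ⟨S,S⟩`, `H₃ = ⟨N,N⟩` and `H₄ = ⟨N,S⟩` are Casimir functions
of the Poisson bracket: they commute with every smooth function `F`. -/
theorem geometric_integrals_are_casimirs
    (F : (Fin 3 → ℝ) → (Fin 3 → ℝ) → (Fin 3 → ℝ) → ℝ)
    (hF : ContDiff ℝ (⊤ : ℕ∞) (fun x : (Fin 3 → ℝ) × (Fin 3 → ℝ) × (Fin 3 → ℝ) =>
      F x.1 x.2.1 x.2.2)) :
    ∀ (M N S : Fin 3 → ℝ),
      pbracket F (fun _ _ S => dot3 S S) M N S = 0 ∧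
      pbracket F (fun _ N _ => dot3 N N) M N S = 0 ∧
      pbracket F (fun _ N S => dot3 N S) M N S = 0 := by
  intro M N S
  refine ⟨?_, ?_, ?_⟩
  all_goals
    unfold pbracket gradM gradN gradS
    simp only [deriv_dot_self, deriv_dot_left, deriv_dot_right,
      deriv_const]
    generalize (fun i => deriv (fun x : ℝ => F (Function.update M i x) N S) (M i)) = a
    generalize (fun i => deriv (fun x : ℝ => F M (Function.update N i x) S) (N i)) = b
    generalize (fun i => deriv (fun x : ℝ => F M N (Function.update S i x)) (S i)) = c
    simp [dot3, cross3]
    try ring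
end
end

section
/- Suppose W is holomorphic on a neighborhood of 0 in ℂ with W(0) = 0, W'(0) = 1, and W satisfies W''(ζ) + (2/ζ)W'(ζ) − ζ⁻⁴ r(1/ζ) W(ζ) = 0 for all ζ ≠ 0 in that neighborhood, where r is the case C < 1 normal-form coefficient. Then, writing W(ζ) = ζ(1 + f₁ζ + f₂ζ² + f₃ζ³ + O(ζ⁴)), the Taylor coefficients are f₁ = 1/(2ω), f₂ = (ω²(4k²−1) + 2(2−ξ))/(20ω²), f₃ = (ω²(108k²−47) + 2(9−7ξ))/(360ω³), and consequently g₃ := −2(2f₁³ − 3f₁f₂ + f₃) = (ω² − 2ξ)/(9ω³); in particular g₃ ≠ 0 if and only if ω² ≠ 2ξ. -/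
noncomputable section

open Complex

/-- The complementary modulus `k' = √(1−k²)`. -/
def kp (k : ℝ) : ℝ := Real.sqrt (1 - k ^ 2)

/-- The coefficient `p(z) = z(−1 + 2(k²−z²)) / ((k²−z²)(z²+k'²))`. -/
def pcoef (k : ℝ) (z : ℂ) : ℂ :=
  z * (-1 + 2 * ((k : ℂ) ^ 2 - z ^ 2)) /
    (((k : ℂ) ^ 2 - z ^ 2) * (z ^ 2 + (kp k : ℂ) ^ 2))

/-- The coefficient `q(z)` in the case `C < 1`. -/
def qLt (k ω ξ : ℝ) (z : ℂ) : ℂ :=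
  (-(ξ : ℂ) + (1 + (ω : ℂ) * z) ^ 2 + (ω : ℂ) ^ 2 * (z ^ 2 + (kp k : ℂ) ^ 2)) /
    ((ω : ℂ) ^ 2 * ((k : ℂ) ^ 2 - z ^ 2) * (z ^ 2 + (kp k : ℂ) ^ 2))

/-- The normal-form coefficient `r = −q + p'/2 + p²/4` in the case `C < 1`. -/
def rLt (k ω ξ : ℝ) (z : ℂ) : ℂ :=
  -qLt k ω ξ z + deriv (pcoef k) z / 2 + pcoef k z ^ 2 / 4

open Filter Topology in
/-- Taylor expansion with analytic remainder. -/
lemma taylor_rem (W : ℂ → ℂ) (hW : AnalyticAt ℂ W 0) :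
    ∃ h : ℂ → ℂ, AnalyticAt ℂ h 0 ∧ ∀ z, W z = W 0 + deriv W 0 * z
      + iteratedDeriv 2 W 0 / 2 * z ^ 2 + iteratedDeriv 3 W 0 / 6 * z ^ 3
      + iteratedDeriv 4 W 0 / 24 * z ^ 4 + z ^ 5 * h z := by
  have hp := hW.hasFPowerSeriesAt
  have key : ∀ n, ((Function.swap dslope 0)^[n] W) 0 = iteratedDeriv n W 0 / (n.factorial : ℂ) := by
    intro n
    have h1 := hp.has_fpower_series_iterate_dslope_fslope n
    have h2 := h1.coeff_zero (fun _ => 1)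
    have h3 := FormalMultilinearSeries.coeff_iterate_fslope
      (p := FormalMultilinearSeries.ofScalars ℂ (fun n ↦ iteratedDeriv n W 0 / (n.factorial : ℂ))) n 0
    rw [FormalMultilinearSeries.coeff_ofScalars, zero_add] at h3
    rw [← h3]
    exact h2.symm
  have step : ∀ n z, ((Function.swap dslope 0)^[n] W) z = ((Function.swap dslope 0)^[n] W) 0
      + z * ((Function.swap dslope 0)^[n+1] W) z := by
    intro n z
    rw [Function.iterate_succ_apply']
    have := sub_smul_dslope ((Function.swap dslope 0)^[n] W) 0 z
    simp only [sub_zero, smul_eq_mul] at this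
    simp only [Function.swap] at this ⊢
    rw [this]; ring
  refine ⟨(Function.swap dslope 0)^[5] W,
    (hp.has_fpower_series_iterate_dslope_fslope 5).analyticAt, fun z => ?_⟩
  have s0 := step 0 z
  have s1 := step 1 z
  have s2 := step 2 z
  have s3 := step 3 z
  have s4 := step 4 z
  rw [key] at s0 s1 s2 s3 s4
  norm_num [Nat.factorial, iteratedDeriv_one, iteratedDeriv_zero] at s0 s1 s2 s3 s4
  norm_num [Function.iterate_succ_apply] at s0 s1 s2 s3 s4 ⊢
  rw [s0, s1, s2, s3, s4]; ring

open Filter Topology in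
/-- A germ `c + z H(z)` vanishing on a punctured neighbourhood has `c = 0`. -/
lemma const_zero (c : ℂ) (G : ℂ → ℂ) (n : ℕ) (hG : ContinuousAt G 0)
    (h : ∀ᶠ z in 𝓝[≠] (0 : ℂ), z ^ n * (c + z * G z) = 0) : c = 0 := by
  have h2 : ∀ᶠ z in 𝓝[≠] (0 : ℂ), c + z * G z = 0 := by
    filter_upwards [h, self_mem_nhdsWithin] with z hz hz0
    exact (mul_eq_zero.1 hz).resolve_left (pow_ne_zero _ hz0)
  have h3 : Tendsto (fun z => c + z * G z) (𝓝[≠] (0 : ℂ)) (𝓝 (c + 0 * G 0)) := by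
    have : ContinuousAt (fun z => c + z * G z) 0 := by fun_prop
    exact this.tendsto.mono_left nhdsWithin_le_nhds
  have h4 : Tendsto (fun _ : ℂ => (0 : ℂ)) (𝓝[≠] (0 : ℂ)) (𝓝 (c + 0 * G 0)) :=
    h3.congr' h2
  have := tendsto_nhds_unique h4 tendsto_const_nhds
  simpa using this

open Filter Topology in
lemma three_zero (c2 c3 c4 : ℂ) (H : ℂ → ℂ) (hH : ContinuousAt H 0)
    (h : ∀ᶠ z in 𝓝[≠] (0 : ℂ), c2 * z ^ 2 + c3 * z ^ 3 + c4 * z ^ 4 + z ^ 5 * H z = 0) :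
    c2 = 0 ∧ c3 = 0 ∧ c4 = 0 := by
  have e2 : c2 = 0 := by
    apply const_zero c2 (fun z => c3 + c4 * z + z ^ 2 * H z) 2 (by fun_prop)
    filter_upwards [h] with z hz
    rw [← hz]; ring
  subst e2
  have e3 : c3 = 0 := by
    apply const_zero c3 (fun z => c4 + z * H z) 3 (by fun_prop)
    filter_upwards [h] with z hz
    rw [← hz]; ring
  subst e3
  refine ⟨rfl, rfl, ?_⟩
  apply const_zero c4 H 4 hH
  filter_upwards [h] with z hz
  rw [← hz]; ring

lemma kp_sq (k : ℝ) (hk0 : 0 < k) (hk1 : k < 1) : (kp k : ℂ) ^ 2 = 1 - (k : ℂ) ^ 2 := by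
  have : (kp k) ^ 2 = 1 - k ^ 2 := by
    unfold kp
    rw [Real.sq_sqrt]; nlinarith
  exact_mod_cast this

lemma deriv_pcoef (k : ℝ) (z : ℂ) (h1 : (k : ℂ) ^ 2 - z ^ 2 ≠ 0)
    (h2 : z ^ 2 + (kp k : ℂ) ^ 2 ≠ 0) :
    deriv (pcoef k) z =
      ((-1 + 2 * (k : ℂ) ^ 2 - 6 * z ^ 2) * (((k : ℂ) ^ 2 - z ^ 2) * (z ^ 2 + (kp k : ℂ) ^ 2))
        - z * (-1 + 2 * ((k : ℂ) ^ 2 - z ^ 2)) *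
          (-2 * z * (z ^ 2 + (kp k : ℂ) ^ 2) + ((k : ℂ) ^ 2 - z ^ 2) * (2 * z)))
      / (((k : ℂ) ^ 2 - z ^ 2) * (z ^ 2 + (kp k : ℂ) ^ 2)) ^ 2 := by
  have hz := hasDerivAt_id z
  have hz2 : HasDerivAt (fun z : ℂ => z ^ 2) (2 * z) z := by simpa using hasDerivAt_pow 2 z
  have ha : HasDerivAt (fun z : ℂ => (k : ℂ) ^ 2 - z ^ 2) (-(2 * z)) z := hz2.const_sub _
  have hb : HasDerivAt (fun z : ℂ => z ^ 2 + (kp k : ℂ) ^ 2) (2 * z) z := hz2.add_const _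
  have hn := hz.mul ((ha.const_mul 2).const_add (-1))
  have := hn.div (ha.mul hb) (mul_ne_zero h1 h2)
  have h3 := this.deriv
  have h4 : deriv (pcoef k) z = _ := h3
  rw [h4]
  simp only [Pi.mul_apply, id]
  congr 1
  ring

/-- The coefficient after multiplying out, as a polynomial. -/
lemma r_poly (k ω ξ : ℝ) (hk0 : 0 < k) (hk1 : k < 1) (hω : 0 < ω) (z : ℂ) (hz : z ≠ 0)
    (h1 : (k : ℂ) ^ 2 * z ^ 2 - 1 ≠ 0) (h2 : 1 + (1 - (k : ℂ) ^ 2) * z ^ 2 ≠ 0)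
    (c d e : ℂ) (hc : c = 2 * (k : ℂ) ^ 2 - 1) (hd : d = (k : ℂ) ^ 2 * (1 - (k : ℂ) ^ 2))
    (he : e = 1 - ξ + ω ^ 2 * (1 - (k : ℂ) ^ 2)) :
    rLt k ω ξ (1 / z) * (4 * ω ^ 2 * (-1 + c * z ^ 2 + d * z ^ 4) ^ 2) =
      z ^ 2 * (8 * ω ^ 2 + 8 * ω * z + (4 * e - 10 * c * ω ^ 2) * z ^ 2 - 8 * ω * c * z ^ 3
        + z ^ 4 * (-4 * (c * e + d * (2 * ω ^ 2 + 2 * ω * z + e * z ^ 2))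
          - 2 * ω ^ 2 * (c ^ 2 + 6 * d - c * d * z ^ 2) + ω ^ 2 * c ^ 2)) := by
  have hk := kp_sq k hk0 hk1
  have hw : (ω : ℂ) ≠ 0 := by exact_mod_cast hω.ne'
  have e1 : (k : ℂ) ^ 2 - (1 / z) ^ 2 = ((k : ℂ) ^ 2 * z ^ 2 - 1) / z ^ 2 := by
    field_simp
  have e2 : (1 / z) ^ 2 + (kp k : ℂ) ^ 2 = (1 + (1 - (k : ℂ) ^ 2) * z ^ 2) / z ^ 2 := by
    rw [hk]; field_simp
  have n1 : (k : ℂ) ^ 2 - (1 / z) ^ 2 ≠ 0 := by rw [e1]; positivity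
  have n2 : (1 / z) ^ 2 + (kp k : ℂ) ^ 2 ≠ 0 := by rw [e2]; positivity
  have hD : -1 + c * z ^ 2 + d * z ^ 4
      = ((k : ℂ) ^ 2 * z ^ 2 - 1) * (1 + (1 - (k : ℂ) ^ 2) * z ^ 2) := by
    rw [hc, hd]; ring
  rw [hD]
  unfold rLt
  rw [deriv_pcoef k _ n1 n2]
  unfold qLt pcoef
  rw [e1, e2]
  generalize hA : (k : ℂ) ^ 2 * z ^ 2 - 1 = A at *
  generalize hB : 1 + (1 - (k : ℂ) ^ 2) * z ^ 2 = B at *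
  field_simp
  subst hA hB hc hd he
  ring

/-- if `W` is holomorphic near `0`, `W(0) = 0`, `W'(0) = 1`, and `W`
satisfies `W'' + (2/ζ)W' − ζ⁻⁴ r(1/ζ) W = 0` (case `C < 1`) on a punctured
neighbourhood of `0`, then its Taylor coefficients `f₁, f₂, f₃` (from
`W(ζ) = ζ(1 + f₁ζ + f₂ζ² + f₃ζ³ + O(ζ⁴))`) are as stated, and
`g₃ = −2(2f₁³ − 3f₁f₂ + f₃) = (ω² − 2ξ)/(9ω³)`; in particular `g₃ ≠ 0 ↔ ω² ≠ 2ξ`. -/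
theorem taylor_coefficients_at_infinity (k ω ξ : ℝ)
    (hk0 : 0 < k) (hk1 : k < 1) (hω : 0 < ω)
    (W : ℂ → ℂ) (U : Set ℂ) (hU : U ∈ nhds (0 : ℂ))
    (hW : AnalyticOnNhd ℂ W U) (hW0 : W 0 = 0) (hW1 : deriv W 0 = 1)
    (hode : ∀ ζ ∈ U, ζ ≠ 0 →
      deriv (deriv W) ζ + (2 / ζ) * deriv W ζ
        - (1 / ζ ^ 4) * rLt k ω ξ (1 / ζ) * W ζ = 0) :
    ∀ f₁ f₂ f₃ : ℂ,
      f₁ = iteratedDeriv 2 W 0 / 2 →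
      f₂ = iteratedDeriv 3 W 0 / 6 →
      f₃ = iteratedDeriv 4 W 0 / 24 →
      f₁ = 1 / (2 * (ω : ℂ)) ∧
      f₂ = ((ω : ℂ) ^ 2 * (4 * (k : ℂ) ^ 2 - 1) + 2 * (2 - (ξ : ℂ)))
            / (20 * (ω : ℂ) ^ 2) ∧
      f₃ = ((ω : ℂ) ^ 2 * (108 * (k : ℂ) ^ 2 - 47) + 2 * (9 - 7 * (ξ : ℂ)))
            / (360 * (ω : ℂ) ^ 3) ∧
      (-2) * (2 * f₁ ^ 3 - 3 * f₁ * f₂ + f₃)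
        = ((ω : ℂ) ^ 2 - 2 * (ξ : ℂ)) / (9 * (ω : ℂ) ^ 3) ∧
      ((-2) * (2 * f₁ ^ 3 - 3 * f₁ * f₂ + f₃) ≠ 0 ↔ (ω : ℂ) ^ 2 ≠ 2 * (ξ : ℂ)) := by
  intro f₁ f₂ f₃ hf1 hf2 hf3
  have hw : (ω : ℂ) ≠ 0 := by exact_mod_cast hω.ne'
  obtain ⟨h, hh, hT⟩ := taylor_rem W (hW 0 (mem_of_mem_nhds hU))
  rw [hW0, hW1, ← hf1, ← hf2, ← hf3] at hT
  have hWe : W = fun z => 0 + 1 * z + f₁ * z ^ 2 + f₂ * z ^ 3 + f₃ * z ^ 4 + z ^ 5 * h z :=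
    funext hT
  have d1 : ∀ᶠ z in nhds (0 : ℂ), deriv W z =
      1 + 2 * f₁ * z + 3 * f₂ * z ^ 2 + 4 * f₃ * z ^ 3 + 5 * z ^ 4 * h z + z ^ 5 * deriv h z := by
    filter_upwards [hh.eventually_analyticAt] with z hz
    have hp : ∀ n : ℕ, HasDerivAt (fun z : ℂ => z ^ n) (n * z ^ (n - 1)) z := fun n =>
      hasDerivAt_pow n z
    have := ((((((hasDerivAt_id z).const_mul 1).const_add 0).add ((hp 2).const_mul f₁)).add
      ((hp 3).const_mul f₂)).add ((hp 4).const_mul f₃)).add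
      ((hp 5).mul hz.differentiableAt.hasDerivAt)
    have h4 := this.congr_of_eventuallyEq (f₁ := W) (by
      filter_upwards with y
      rw [hT y]; simp)
    rw [h4.deriv]
    norm_num
    ring
  have d2 : ∀ᶠ z in nhds (0 : ℂ), deriv (deriv W) z =
      2 * f₁ + 6 * f₂ * z + 12 * f₃ * z ^ 2 + 20 * z ^ 3 * h z + 10 * z ^ 4 * deriv h z
        + z ^ 5 * deriv (deriv h) z := by
    filter_upwards [hh.eventually_analyticAt, d1.eventually_nhds] with z hz hd
    have hp : ∀ n : ℕ, HasDerivAt (fun z : ℂ => z ^ n) (n * z ^ (n - 1)) z := fun n =>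
      hasDerivAt_pow n z
    have := ((((((hasDerivAt_id z).const_mul (2 * f₁)).const_add 1).add
      ((hp 2).const_mul (3 * f₂))).add
      ((hp 3).const_mul (4 * f₃))).add (((hp 4).const_mul 5).mul
      hz.differentiableAt.hasDerivAt)).add
      ((hp 5).mul hz.deriv.differentiableAt.hasDerivAt)
    have h4 := this.congr_of_eventuallyEq (f₁ := deriv W) (by
      filter_upwards [hd] with y hy
      rw [hy]; simp)
    rw [h4.deriv]
    norm_num
    ring
  have c0 := hh.continuousAt
  have c1 := hh.deriv.continuousAt
  have c2 := hh.deriv.deriv.continuousAt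
  have v1 : ∀ᶠ z in nhds (0 : ℂ), (k : ℂ) ^ 2 * z ^ 2 - 1 ≠ 0 := by
    have : ContinuousAt (fun z : ℂ => (k : ℂ) ^ 2 * z ^ 2 - 1) 0 := by fun_prop
    exact this.eventually_ne (by norm_num)
  have v2 : ∀ᶠ z in nhds (0 : ℂ), 1 + (1 - (k : ℂ) ^ 2) * z ^ 2 ≠ 0 := by
    have : ContinuousAt (fun z : ℂ => 1 + (1 - (k : ℂ) ^ 2) * z ^ 2) 0 := by fun_prop
    exact this.eventually_ne (by norm_num)
  obtain ⟨c, hc⟩ : ∃ c : ℂ, c = 2 * (k : ℂ) ^ 2 - 1 := ⟨_, rfl⟩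
  obtain ⟨d, hd⟩ : ∃ d : ℂ, d = (k : ℂ) ^ 2 * (1 - (k : ℂ) ^ 2) := ⟨_, rfl⟩
  obtain ⟨e, he⟩ : ∃ e : ℂ, e = 1 - ξ + ω ^ 2 * (1 - (k : ℂ) ^ 2) := ⟨_, rfl⟩
  obtain ⟨n2, hn2⟩ : ∃ n2 : ℂ, n2 = 4 * e - 10 * c * ω ^ 2 := ⟨_, rfl⟩
  obtain ⟨M, hM⟩ : ∃ M : ℂ → ℂ, M = fun z =>
    (-4 * (c * e + d * (2 * ω ^ 2 + 2 * ω * z + e * z ^ 2))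
          - 2 * ω ^ 2 * (c ^ 2 + 6 * d - c * d * z ^ 2) + ω ^ 2 * c ^ 2) := ⟨_, rfl⟩
  obtain ⟨E, hE⟩ : ∃ E : ℂ → ℂ, E = fun z =>
    (c ^ 2 - 2 * d + 2 * d * c * z ^ 2 + d ^ 2 * z ^ 4) := ⟨_, rfl⟩
  obtain ⟨g, hg⟩ : ∃ g : ℂ → ℂ, g = fun z =>
    (30 * h z + 12 * z * deriv h z + z ^ 2 * deriv (deriv h) z) := ⟨_, rfl⟩
  have cM : ContinuousAt M 0 := by rw [hM]; fun_prop
  have cE : ContinuousAt E 0 := by rw [hE]; fun_prop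
  have cg : ContinuousAt g 0 := by rw [hg]; fun_prop
  have main := three_zero
    (4 * ω ^ 2 * (6 * f₁) - (8 * ω ^ 2 * f₁ + 8 * ω))
    (4 * ω ^ 2 * (12 * f₂ - 4 * c) - (8 * ω ^ 2 * f₂ + 8 * ω * f₁ + n2))
    (4 * ω ^ 2 * (20 * f₃ - 12 * c * f₁) - (8 * ω ^ 2 * f₃ + 8 * ω * f₂ + n2 * f₁ - 8 * ω * c))
    (fun z => 4 * ω ^ 2 * (-2 * c * (12 * f₂ + 20 * f₃ * z) + (1 - 2 * c * z ^ 2) * g z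
        + E z * (2 + 6 * f₁ * z + 12 * f₂ * z ^ 2 + 20 * f₃ * z ^ 3 + z ^ 4 * g z))
      - (M z * (1 + f₁ * z + f₂ * z ^ 2 + f₃ * z ^ 3 + z ^ 4 * h z)
        + (8 * ω ^ 2 + 8 * ω * z + n2 * z ^ 2 - 8 * ω * c * z ^ 3) * h z
        + (8 * ω * f₃ + n2 * f₂ - 8 * ω * c * f₁) + (n2 * f₃ - 8 * ω * c * f₂) * z
        - 8 * ω * c * f₃ * z ^ 2)) (by fun_prop) (by
      filter_upwards [nhdsWithin_le_nhds d1, nhdsWithin_le_nhds d2, nhdsWithin_le_nhds v1,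
        nhdsWithin_le_nhds v2, nhdsWithin_le_nhds hU, self_mem_nhdsWithin] with z d1 d2 v1 v2 hzU hz
      have hz : z ≠ 0 := hz
      have o := hode z hzU hz
      have rp := r_poly k ω ξ hk0 hk1 hω z hz v1 v2 c d e hc hd he
      have hMz : M z = _ := congrFun hM z
      beta_reduce at hMz
      rw [← hMz, ← hn2] at rp
      have hEz : (-1 + c * z ^ 2 + d * z ^ 4) ^ 2 = 1 - 2 * c * z ^ 2 + z ^ 4 * E z := by
        rw [hE]; ring
      rw [hEz] at rp
      have o2 : z ^ 2 * deriv (deriv W) z + 2 * z * deriv W z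
          = rLt k ω ξ (1 / z) / z ^ 2 * W z := by
        have : z ^ 2 * (deriv (deriv W) z + (2 / z) * deriv W z
          - (1 / z ^ 4) * rLt k ω ξ (1 / z) * W z) = 0 := by rw [o, mul_zero]
        rw [← sub_eq_zero, ← this]
        field_simp
      have o3 : 4 * ω ^ 2 * (1 - 2 * c * z ^ 2 + z ^ 4 * E z) *
          (z ^ 2 * deriv (deriv W) z + 2 * z * deriv W z)
          = (8 * ω ^ 2 + 8 * ω * z + n2 * z ^ 2 - 8 * ω * c * z ^ 3 + z ^ 4 * M z) * W z := by
        rw [o2]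
        have : rLt k ω ξ (1 / z) / z ^ 2 * (4 * ω ^ 2 * (1 - 2 * c * z ^ 2 + z ^ 4 * E z))
          = (8 * ω ^ 2 + 8 * ω * z + n2 * z ^ 2 - 8 * ω * c * z ^ 3 + z ^ 4 * M z) := by
          rw [div_mul_eq_mul_div, rp]; field_simp
        rw [← this]; ring
      rw [d1, d2, hT z] at o3
      have hgz : g z = _ := congrFun hg z
      beta_reduce at hgz
      rw [hgz]
      linear_combination o3)
  obtain ⟨m1, m2, m3⟩ := main
  have r1 : f₁ = 1 / (2 * (ω : ℂ)) := by
    have : (ω : ℂ) * (f₁ * (2 * ω) - 1) = 0 := by linear_combination m1 / 8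
    rw [eq_div_iff (by simpa using hw)]
    linear_combination (mul_eq_zero.1 this).resolve_left hw
  have r2 : f₂ = ((ω : ℂ) ^ 2 * (4 * (k : ℂ) ^ 2 - 1) + 2 * (2 - (ξ : ℂ)))
            / (20 * (ω : ℂ) ^ 2) := by
    rw [r1, hn2, he, hc] at m2
    field_simp at m2 ⊢
    linear_combination m2 / 4
  have r3 : f₃ = ((ω : ℂ) ^ 2 * (108 * (k : ℂ) ^ 2 - 47) + 2 * (9 - 7 * (ξ : ℂ)))
            / (360 * (ω : ℂ) ^ 3) := by
    rw [r1, r2, hn2, he, hc] at m3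
    field_simp at m3 ⊢
    linear_combination m3 / 8
  have r4 : (-2) * (2 * f₁ ^ 3 - 3 * f₁ * f₂ + f₃)
        = ((ω : ℂ) ^ 2 - 2 * (ξ : ℂ)) / (9 * (ω : ℂ) ^ 3) := by
    rw [r1, r2, r3]
    field_simp
    ring
  refine ⟨r1, r2, r3, r4, ?_⟩
  rw [r4, ne_eq, ne_eq, div_eq_zero_iff, sub_eq_zero]
  simp [hw]
end
end

section
/- Let r be the case C < 1 normal-form coefficient with poles z₁ = k, z₂ = −k, z₃ = ik', z₄ = −ik'. There exist e_∞ ∈ {−1, 2}, e₁, e₂, e₃, e₄ ∈ {1/4, 3/4} with d := 1 − (e_∞ + e₁ + e₂ + e₃ + e₄) a non-negative integer, and a monic polynomial P ∈ ℂ[z] of degree d satisfying P'' + 2wP' + (w' + w² − r)P = 0 on ℂ ∖ {z₁,z₂,z₃,z₄}, where w(z) = Σᵢ₌₁⁴ eᵢ/(z−zᵢ), if and only if 2k² − 1 > 0, ξ = 1/(2k²−1) and ω² = 2/(2k²−1); in that case the parameters are e_∞ = −1, e₁ = e₂ = e₃ = e₄ = 1/4 and P(z) = z − 1/ω. -/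
noncomputable section

open Complex

/-- The poles `z₁ = k`, `z₂ = −k`, `z₃ = ik'`, `z₄ = −ik'`. -/
def poles (k : ℝ) : Fin 4 → ℂ :=
  ![(k : ℂ), -(k : ℂ), I * (kp k : ℂ), -(I * (kp k : ℂ))]

lemma kp_pos (k : ℝ) (hk0 : 0 < k) (hk1 : k < 1) : 0 < kp k :=
  Real.sqrt_pos.2 (by nlinarith)

lemma forall_poles (k : ℝ) (z : ℂ) : (∀ i, z ≠ poles k i) ↔
    (z - k ≠ 0 ∧ z + k ≠ 0 ∧ z - I * kp k ≠ 0 ∧ z + I * kp k ≠ 0) := by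
  simp [poles, Fin.forall_fin_succ, sub_eq_zero, add_eq_zero_iff_eq_neg]

lemma deriv_w (k : ℝ) (e : Fin 4 → ℂ) (z : ℂ) (hz : ∀ i, z ≠ poles k i) :
    deriv (fun z => ∑ i, e i / (z - poles k i)) z = -∑ i, e i / (z - poles k i) ^ 2 := by
  have h : ∀ i ∈ (Finset.univ : Finset (Fin 4)), HasDerivAt (fun z => e i / (z - poles k i))
      (-(e i / (z - poles k i) ^ 2)) z := by
    intro i _
    have h1 := (((hasDerivAt_id z).sub_const (poles k i)).inv
      (sub_ne_zero.2 (hz i))).const_mul (e i)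
    refine (h1.congr_deriv ?_).congr_of_eventuallyEq ?_
    · simp only [id]; ring
    · filter_upwards with x
      simp [div_eq_mul_inv]
  rw [(HasDerivAt.fun_sum h).deriv, Finset.sum_neg_distrib]

lemma pcoef_eq (k : ℝ) (hk0 : 0 < k) (hk1 : k < 1) (z : ℂ) (hz : ∀ i, z ≠ poles k i) :
    pcoef k z = ∑ i, (1 / 2 : ℂ) / (z - poles k i) := by
  obtain ⟨h1, h2, h3, h4⟩ := (forall_poles k z).1 hz
  have hj : (I * (kp k : ℂ)) ^ 2 = (k : ℂ) ^ 2 - 1 := by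
    rw [mul_pow, I_sq, kp_sq k hk0 hk1]; ring
  have hk := kp_sq k hk0 hk1
  unfold pcoef
  simp only [Fin.sum_univ_four, poles, Matrix.cons_val, sub_neg_eq_add]
  generalize I * (kp k : ℂ) = j at *
  have e1 : (k : ℂ) ^ 2 - z ^ 2 = -((z - k) * (z + k)) := by ring
  have e2 : z ^ 2 + (kp k : ℂ) ^ 2 = (z - j) * (z + j) := by rw [hk]; linear_combination hj
  rw [e2, e1]
  field_simp
  linear_combination 2 * z * hj

lemma rLt_eq (k ω ξ : ℝ) (hk0 : 0 < k) (hk1 : k < 1) (hω : 0 < ω) (z : ℂ)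
    (hz : ∀ i, z ≠ poles k i) :
    rLt k ω ξ z = (2 * z ^ 2 + 2 * z / ω + (1 - ξ) / ω ^ 2 + 1 - k ^ 2) /
        ((z - k) * (z + k) * (z - I * kp k) * (z + I * kp k))
      - (1 / 4) * ∑ i, 1 / (z - poles k i) ^ 2
      + (1 / 16) * (∑ i, 1 / (z - poles k i)) ^ 2 := by
  have hev : pcoef k =ᶠ[nhds z] fun z => ∑ i, (1 / 2 : ℂ) / (z - poles k i) := by
    have : ∀ᶠ y in nhds z, ∀ i, y ≠ poles k i :=
      Filter.eventually_all.2 fun i => isOpen_ne.mem_nhds (hz i)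
    filter_upwards [this] with y hy using pcoef_eq k hk0 hk1 y hy
  have hq : qLt k ω ξ z = -((2 * z ^ 2 + 2 * z / ω + (1 - ξ) / ω ^ 2 + 1 - k ^ 2) /
        ((z - k) * (z + k) * (z - I * kp k) * (z + I * kp k))) := by
    obtain ⟨h1, h2, h3, h4⟩ := (forall_poles k z).1 hz
    have hj : (I * (kp k : ℂ)) ^ 2 = (k : ℂ) ^ 2 - 1 := by
      rw [mul_pow, I_sq, kp_sq k hk0 hk1]; ring
    have hk := kp_sq k hk0 hk1
    have hw : (ω : ℂ) ≠ 0 := by exact_mod_cast hω.ne'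
    unfold qLt
    generalize I * (kp k : ℂ) = j at *
    have e1 : (k : ℂ) ^ 2 - z ^ 2 = -((z - k) * (z + k)) := by ring
    have e2 : z ^ 2 + (kp k : ℂ) ^ 2 = (z - j) * (z + j) := by rw [hk]; linear_combination hj
    have e3 : -(ξ : ℂ) + (1 + (ω : ℂ) * z) ^ 2 + (ω : ℂ) ^ 2 * (z ^ 2 + (kp k : ℂ) ^ 2)
      = ω ^ 2 * (2 * z ^ 2 + 2 * z / ω + (1 - ξ) / ω ^ 2 + 1 - k ^ 2) := by
      rw [hk]; field_simp; ring
    rw [e3, e2, e1]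
    generalize 2 * z ^ 2 + 2 * z / ω + (1 - ξ) / ω ^ 2 + 1 - (k : ℂ) ^ 2 = n
    field_simp
  unfold rLt
  rw [hev.deriv_eq, deriv_w k _ z hz, pcoef_eq k hk0 hk1 z hz, hq]
  simp only [Fin.sum_univ_four]
  ring

/-- Two exponents equal to `3/4` (at `a` and `b`). -/
lemma two_case (a b c d z n : ℂ) (ha : z - a ≠ 0) (hb : z - b ≠ 0) (hc : z - c ≠ 0)
    (hd : z - d ≠ 0)
    (h : -(3 / 4 / (z - a) ^ 2 + 3 / 4 / (z - b) ^ 2 + 1 / 4 / (z - c) ^ 2 + 1 / 4 / (z - d) ^ 2)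
      + (3 / 4 / (z - a) + 3 / 4 / (z - b) + 1 / 4 / (z - c) + 1 / 4 / (z - d)) ^ 2
      - (n / ((z - a) * (z - b) * (z - c) * (z - d))
        - (1 / 4) * (1 / (z - a) ^ 2 + 1 / (z - b) ^ 2 + 1 / (z - c) ^ 2 + 1 / (z - d) ^ 2)
        + (1 / 16) * (1 / (z - a) + 1 / (z - b) + 1 / (z - c) + 1 / (z - d)) ^ 2) = 0) :
    n = (z - c) * (z - d) + 1 / 4 * (2 * z - a - b) * (2 * z - c - d) := by
  have e1 : 2 * z - a - b = (z - a) + (z - b) := by ring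
  have e2 : 2 * z - c - d = (z - c) + (z - d) := by ring
  rw [e1, e2]
  generalize z - a = A at *
  generalize z - b = B at *
  generalize z - c = C at *
  generalize z - d = D at *
  have h2 : n / (A * B * C * D) = (C * D + 1 / 4 * (A + B) * (C + D)) / (A * B * C * D) := by
    have : (C * D + 1 / 4 * (A + B) * (C + D)) / (A * B * C * D)
      = 1 / A * (1 / B) + 1 / 4 * (1 / A + 1 / B) * (1 / C + 1 / D) := by
      field_simp
      ring
    rw [this]
    linear_combination -h
  exact (div_left_inj' (by simp [ha, hb, hc, hd])).1 h2

/-- All exponents `1/4`, `P` has values `P0`, `P1`, with vanishing second derivative. -/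
lemma one_case (k j z n c : ℂ) (h1 : z - k ≠ 0) (h2 : z + k ≠ 0) (h3 : z - j ≠ 0)
    (h4 : z + j ≠ 0) (hj : j ^ 2 = k ^ 2 - 1) :
    2 * (1 / 4 / (z - k) + 1 / 4 / (z + k) + 1 / 4 / (z - j) + 1 / 4 / (z + j))
      + (-(1 / 4 / (z - k) ^ 2 + 1 / 4 / (z + k) ^ 2 + 1 / 4 / (z - j) ^ 2 + 1 / 4 / (z + j) ^ 2)
      + (1 / 4 / (z - k) + 1 / 4 / (z + k) + 1 / 4 / (z - j) + 1 / 4 / (z + j)) ^ 2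
      - (n / ((z - k) * (z + k) * (z - j) * (z + j))
        - (1 / 4) * (1 / (z - k) ^ 2 + 1 / (z + k) ^ 2 + 1 / (z - j) ^ 2 + 1 / (z + j) ^ 2)
        + (1 / 16) * (1 / (z - k) + 1 / (z + k) + 1 / (z - j) + 1 / (z + j)) ^ 2)) * c
      = (z * (2 * z ^ 2 - 2 * k ^ 2 + 1) - n * c) / ((z - k) * (z + k) * (z - j) * (z + j)) := by
  have : z * (2 * z ^ 2 - 2 * k ^ 2 + 1) / ((z - k) * (z + k) * (z - j) * (z + j))
      = 2 * (1 / 4 / (z - k) + 1 / 4 / (z + k) + 1 / 4 / (z - j) + 1 / 4 / (z + j)) := by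
    field_simp
    linear_combination 4 * z * hj
  rw [sub_div, this]
  ring

lemma sol (k ω ξ : ℝ) (hk0 : 0 < k) (hk1 : k < 1) (hω : 0 < ω)
    (hh : 0 < 2 * k ^ 2 - 1 ∧ ξ = 1 / (2 * k ^ 2 - 1) ∧ ω ^ 2 = 2 / (2 * k ^ 2 - 1))
    (z : ℂ) (hz : ∀ i, z ≠ poles k i) :
    2 * (∑ i, (1 / 4 : ℂ) / (z - poles k i))
          + (deriv (fun z => ∑ i, (1 / 4 : ℂ) / (z - poles k i)) z
              + (∑ i, (1 / 4 : ℂ) / (z - poles k i)) ^ 2 - rLt k ω ξ z)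
            * (z - 1 / (ω : ℂ)) = 0 := by
  obtain ⟨h1, h2, h3, h4⟩ := (forall_poles k z).1 hz
  have hj : (I * (kp k : ℂ)) ^ 2 = (k : ℂ) ^ 2 - 1 := by
    rw [mul_pow, I_sq, kp_sq k hk0 hk1]; ring
  rw [rLt_eq k ω ξ hk0 hk1 hω z hz, deriv_w k _ z hz]
  simp only [Fin.sum_univ_four, poles, Matrix.cons_val, sub_neg_eq_add]
  rw [one_case _ _ _ _ _ h1 h2 h3 h4 hj]
  obtain ⟨g1, g2, g3⟩ := hh
  have g3' : 2 * k ^ 2 - 1 = 2 / ω ^ 2 := by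
    rw [g3]; field_simp
  have g2' : (1 - ξ) / ω ^ 2 + 1 - k ^ 2 = 0 := by
    rw [g2, g3]; field_simp; ring
  have g3c : 2 * (k : ℂ) ^ 2 - 1 = 2 / (ω : ℂ) ^ 2 := by exact_mod_cast g3'
  have g2c : (1 - (ξ : ℂ)) / (ω : ℂ) ^ 2 + 1 - (k : ℂ) ^ 2 = 0 := by exact_mod_cast g2'
  rw [div_eq_zero_iff]
  left
  linear_combination -z * g3c - (z - 1 / (ω : ℂ)) * g2c

lemma real_not_pole (k : ℝ) (hk0 : 0 < k) (hk1 : k < 1) (x : ℝ)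
    (hx : x = 0 ∨ x = 1 ∨ x = -1) : ∀ i, (x : ℂ) ≠ poles k i := by
  have hp := kp_pos k hk0 hk1
  rw [forall_poles]
  refine ⟨?_, ?_, ?_, ?_⟩ <;> intro h
  · have := congrArg re h
    simp at this
    rcases hx with rfl | rfl | rfl <;> linarith
  · have := congrArg re h
    simp at this
    rcases hx with rfl | rfl | rfl <;> linarith
  · have := congrArg im h
    simp at this
    linarith
  · have := congrArg im h
    simp at this
    linarith

/-- Contradiction from the two-exponents case. -/
lemma two_contra (ω : ℝ) (hω : 0 < ω) (a b c d m : ℂ) (hs : a + b + c + d = 0)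
    (him : (c + d).im = 0 → c + d = 0)
    (h1 : 2 * 1 ^ 2 + 2 * 1 / (ω : ℂ) + m
      = (1 - c) * (1 - d) + 1 / 4 * (2 * 1 - a - b) * (2 * 1 - c - d))
    (h2 : 2 * (-1) ^ 2 + 2 * (-1) / (ω : ℂ) + m
      = (-1 - c) * (-1 - d) + 1 / 4 * (2 * (-1) - a - b) * (2 * (-1) - c - d)) : False := by
  have h : c + d = -((2 / ω : ℝ) : ℂ) := by
    push_cast
    linear_combination (1 / 2) * h1 - (1 / 2) * h2 - (1 / 2) * hs
  have h0 := him (by rw [h, ← ofReal_neg, ofReal_im])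
  rw [h0] at h
  have h3 : (2 / ω : ℝ) = 0 := by
    have : ((2 / ω : ℝ) : ℂ) = 0 := by linear_combination h
    exact_mod_cast this
  have : 0 < 2 / ω := by positivity
  linarith

lemma mk_nat (x : ℂ) (h : x = 1 / 4 ∨ x = 3 / 4) :
    ∃ m : ℕ, (m = 0 ∨ m = 1) ∧ x = (1 + 2 * m) / 4 := by
  rcases h with rfl | rfl
  · exact ⟨0, by simp, by norm_num⟩
  · exact ⟨1, by simp, by norm_num⟩

set_option maxHeartbeats 2000000 in
/-- case `C < 1`: the first case of the Kovacic algorithm succeeds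
(there are exponents `e_∞ ∈ {−1,2}`, `eᵢ ∈ {1/4,3/4}` with
`d = 1 − (e_∞ + Σeᵢ) ∈ ℕ₀` and a monic polynomial `P` of degree `d` with
`P'' + 2wP' + (w' + w² − r)P = 0`, `w = Σ eᵢ/(z−zᵢ)`) if and only if
`2k² − 1 > 0`, `ξ = 1/(2k²−1)` and `ω² = 2/(2k²−1)`; in that case the data are
`e_∞ = −1`, `e₁ = e₂ = e₃ = e₄ = 1/4` and `P(z) = z − 1/ω`. -/
theorem kovacic_case_one_Clt (k ω ξ : ℝ)
    (hk0 : 0 < k) (hk1 : k < 1) (hω : 0 < ω) :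
    ((∃ (einf : ℂ) (e : Fin 4 → ℂ) (d : ℕ) (P : Polynomial ℂ),
        (einf = -1 ∨ einf = 2) ∧ (∀ i, e i = 1 / 4 ∨ e i = 3 / 4) ∧
        (d : ℂ) = 1 - (einf + ∑ i, e i) ∧
        P.Monic ∧ P.natDegree = d ∧
        (∀ z : ℂ, (∀ i, z ≠ poles k i) →
          (P.derivative.derivative.eval z)
            + 2 * (∑ i, e i / (z - poles k i)) * (P.derivative.eval z)
            + (deriv (fun z => ∑ i, e i / (z - poles k i)) z
                + (∑ i, e i / (z - poles k i)) ^ 2 - rLt k ω ξ z) * P.eval z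
            = 0))
      ↔ (0 < 2 * k ^ 2 - 1 ∧ ξ = 1 / (2 * k ^ 2 - 1) ∧
          ω ^ 2 = 2 / (2 * k ^ 2 - 1))) ∧
    ((0 < 2 * k ^ 2 - 1 ∧ ξ = 1 / (2 * k ^ 2 - 1) ∧ ω ^ 2 = 2 / (2 * k ^ 2 - 1)) →
      ∀ z : ℂ, (∀ i, z ≠ poles k i) →
        deriv (deriv (fun z : ℂ => z - 1 / (ω : ℂ))) z
          + 2 * (∑ i, (1 / 4 : ℂ) / (z - poles k i))
            * deriv (fun z : ℂ => z - 1 / (ω : ℂ)) z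
          + (deriv (fun z => ∑ i, (1 / 4 : ℂ) / (z - poles k i)) z
              + (∑ i, (1 / 4 : ℂ) / (z - poles k i)) ^ 2 - rLt k ω ξ z)
            * (z - 1 / (ω : ℂ))
          = 0) := by
  have hsol := sol k ω ξ hk0 hk1 hω
  refine ⟨⟨?_, ?_⟩, ?_⟩
  · rintro ⟨einf, e, d, P, hinf, he, hd, hP, hPd, H⟩
    obtain ⟨m0, hm0, h0⟩ := mk_nat _ (he 0)
    obtain ⟨m1, hm1, h1⟩ := mk_nat _ (he 1)
    obtain ⟨m2, hm2, h2⟩ := mk_nat _ (he 2)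
    obtain ⟨m3, hm3, h3⟩ := mk_nat _ (he 3)
    have hn : ∃ n : ℕ, einf = -1 + 3 * n := by
      rcases hinf with rfl | rfl
      · exact ⟨0, by norm_num⟩
      · exact ⟨1, by norm_num⟩
    obtain ⟨n, hn⟩ := hn
    have hnat : 2 * d + 6 * n + m0 + m1 + m2 + m3 = 2 := by
      rw [Fin.sum_univ_four, h0, h1, h2, h3, hn] at hd
      have : ((2 * d + 6 * n + m0 + m1 + m2 + m3 : ℕ) : ℂ) = (2 : ℕ) := by
        push_cast
        linear_combination 2 * hd
      exact_mod_cast this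
    have hp := kp_pos k hk0 hk1
    have hj : (I * (kp k : ℂ)) ^ 2 = (k : ℂ) ^ 2 - 1 := by
      rw [mul_pow, I_sq, kp_sq k hk0 hk1]; ring
    have hw : (ω : ℂ) ≠ 0 := by exact_mod_cast hω.ne'
    have hz1 := real_not_pole k hk0 hk1 1 (by simp)
    have hz2 := real_not_pole k hk0 hk1 (-1) (by simp)
    have hz0 := real_not_pole k hk0 hk1 0 (by simp)
    push_cast at hz0 hz1 hz2
    have K : ∀ z : ℂ, (∀ i, z ≠ poles k i) → _ := fun z hz => by
      have := H z hz
      rw [rLt_eq k ω ξ hk0 hk1 hω z hz, deriv_w k _ z hz] at this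
      simp only [Fin.sum_univ_four, h0, h1, h2, h3] at this
      exact this
    have K0 := K 0 hz0
    have K1 := K 1 hz1
    have K2 := K (-1) hz2
    clear K H
    rw [forall_poles] at hz0 hz1 hz2
    obtain hd1 | hd0 : d = 1 ∨ d = 0 := by omega
    · obtain ⟨rfl, rfl, rfl, rfl⟩ : m0 = 0 ∧ m1 = 0 ∧ m2 = 0 ∧ m3 = 0 := by omega
      have hX := hP.eq_X_add_C (hPd.trans hd1)
      generalize P.coeff 0 = c at hX
      subst hX
      simp only [poles, Matrix.cons_val, sub_neg_eq_add, Polynomial.derivative_add,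
        Polynomial.derivative_X, Polynomial.derivative_C, add_zero, Polynomial.derivative_one,
        Polynomial.eval_zero, Polynomial.eval_one, Polynomial.eval_add, Polynomial.eval_X,
        Polynomial.eval_C, Nat.cast_zero, mul_zero, mul_one, zero_add] at K0 K1 K2
      have L0 := one_case (k : ℂ) (I * kp k) 0
        (2 * 0 ^ 2 + 2 * 0 / ω + (1 - ξ) / ω ^ 2 + 1 - k ^ 2) c
        hz0.1 hz0.2.1 hz0.2.2.1 hz0.2.2.2 hj
      have L1 := one_case (k : ℂ) (I * kp k) 1
        (2 * 1 ^ 2 + 2 * 1 / ω + (1 - ξ) / ω ^ 2 + 1 - k ^ 2) (1 + c)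
        hz1.1 hz1.2.1 hz1.2.2.1 hz1.2.2.2 hj
      have L2 := one_case (k : ℂ) (I * kp k) (-1)
        (2 * (-1) ^ 2 + 2 * (-1) / ω + (1 - ξ) / ω ^ 2 + 1 - k ^ 2) (-1 + c)
        hz2.1 hz2.2.1 hz2.2.2.1 hz2.2.2.2 hj
      replace L0 := Eq.trans (c := (0 : ℂ)) L0.symm (by linear_combination K0)
      replace L1 := Eq.trans (c := (0 : ℂ)) L1.symm (by linear_combination K1)
      replace L2 := Eq.trans (c := (0 : ℂ)) L2.symm (by linear_combination K2)
      replace L0 := (div_eq_zero_iff.1 L0).resolve_right (mul_ne_zero (mul_ne_zero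
        (mul_ne_zero hz0.1 hz0.2.1) hz0.2.2.1) hz0.2.2.2)
      replace L1 := (div_eq_zero_iff.1 L1).resolve_right (mul_ne_zero (mul_ne_zero
        (mul_ne_zero hz1.1 hz1.2.1) hz1.2.2.1) hz1.2.2.2)
      replace L2 := (div_eq_zero_iff.1 L2).resolve_right (mul_ne_zero (mul_ne_zero
        (mul_ne_zero hz2.1 hz2.2.1) hz2.2.2.1) hz2.2.2.2)
      have hc : c = -(1 / (ω : ℂ)) := by
        linear_combination -(1 / 4) * L1 - (1 / 4) * L2 + (1 / 2) * L0
      have hcn : c ≠ 0 := by rw [hc]; simp [hw]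
      have e1 : (1 - (ξ : ℂ)) / ω ^ 2 + 1 - k ^ 2 = 0 := by
        refine (mul_eq_zero.1 ?_).resolve_right hcn
        linear_combination -L0
      have e2 : 2 * (k : ℂ) ^ 2 - 1 = 2 / ω ^ 2 := by
        linear_combination (-1 / 2) * L1 + (1 / 2) * L2 - e1 - 2 / (ω : ℂ) * hc
      have e1' : (1 - ξ) / ω ^ 2 + 1 - k ^ 2 = 0 := by exact_mod_cast e1
      have e2' : 2 * k ^ 2 - 1 = 2 / ω ^ 2 := by exact_mod_cast e2
      refine ⟨by rw [e2']; positivity, ?_, ?_⟩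
      · rw [e2']
        have : k ^ 2 = (1 + 2 / ω ^ 2) / 2 := by linarith
        rw [this] at e1'
        field_simp at e1' ⊢
        linarith
      · rw [e2']; field_simp
    · exfalso
      rw [hP.natDegree_eq_zero.1 (hPd.trans hd0)] at K0 K1 K2
      simp only [poles, Matrix.cons_val, sub_neg_eq_add, 
        Polynomial.derivative_one, Polynomial.derivative_zero,
        Polynomial.eval_zero, Polynomial.eval_one] at K0 K1 K2
      have fin : ∀ a b c d : ℂ, a + b + c + d = 0 → ((c + d).im = 0 → c + d = 0) →
          (∀ z : ℂ, (z = 1 ∨ z = -1) → 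
            z - a ≠ 0 ∧ z - b ≠ 0 ∧ z - c ≠ 0 ∧ z - d ≠ 0 ∧ 
            -(3 / 4 / (z - a) ^ 2 + 3 / 4 / (z - b) ^ 2 + 1 / 4 / (z - c) ^ 2
              + 1 / 4 / (z - d) ^ 2)
            + (3 / 4 / (z - a) + 3 / 4 / (z - b) + 1 / 4 / (z - c) + 1 / 4 / (z - d)) ^ 2
            - ((2 * z ^ 2 + 2 * z / ω + (1 - ξ) / ω ^ 2 + 1 - k ^ 2)
                / ((z - a) * (z - b) * (z - c) * (z - d))
              - (1 / 4) * (1 / (z - a) ^ 2 + 1 / (z - b) ^ 2 + 1 / (z - c) ^ 2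
                + 1 / (z - d) ^ 2)
              + (1 / 16) * (1 / (z - a) + 1 / (z - b) + 1 / (z - c) + 1 / (z - d)) ^ 2) = 0) →
          False := by
        intro a b c d hs him hz
        obtain ⟨a1, a2, a3, a4, a5⟩ := hz 1 (Or.inl rfl)
        obtain ⟨b1, b2, b3, b4, b5⟩ := hz (-1) (Or.inr rfl)
        have A := two_case a b c d _ _ a1 a2 a3 a4 a5
        have B := two_case a b c d _ _ b1 b2 b3 b4 b5
        exact two_contra ω hω a b c d ((1 - ξ) / ω ^ 2 + 1 - k ^ 2) hs him
          (by linear_combination A) (by linear_combination B)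
      obtain ⟨p1, p2, p3, p4⟩ := hz1
      obtain ⟨q1, q2, q3, q4⟩ := hz2
      have p2' : (1 : ℂ) - -k ≠ 0 := by rwa [sub_neg_eq_add]
      have p4' : (1 : ℂ) - -(I * kp k) ≠ 0 := by rwa [sub_neg_eq_add]
      have q2' : (-1 : ℂ) - -k ≠ 0 := by rwa [sub_neg_eq_add]
      have q4' : (-1 : ℂ) - -(I * kp k) ≠ 0 := by rwa [sub_neg_eq_add]
      have hp' := hp.ne'
      rcases hm0 with rfl | rfl <;> rcases hm1 with rfl | rfl <;> rcases hm2 with rfl | rfl <;>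
        rcases hm3 with rfl | rfl <;> first
        | (exfalso; omega)
        | skip
      · refine fin (I * (kp k : ℂ)) (-(I * (kp k : ℂ))) (k : ℂ) (-(k : ℂ)) (by ring) (by simp [hp']) ?_
        rintro z (rfl | rfl)
        · refine ⟨p3, p4', p1, p2', ?_⟩
          push_cast at K1
          simp only [sub_neg_eq_add]
          linear_combination K1
        · refine ⟨q3, q4', q1, q2', ?_⟩
          push_cast at K2
          simp only [sub_neg_eq_add]
          linear_combination K2
      · refine fin (-(k : ℂ)) (-(I * (kp k : ℂ))) (k : ℂ) (I * (kp k : ℂ)) (by ring) (by simp [hp']) ?_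
        rintro z (rfl | rfl)
        · refine ⟨p2', p4', p1, p3, ?_⟩
          push_cast at K1
          simp only [sub_neg_eq_add]
          linear_combination K1
        · refine ⟨q2', q4', q1, q3, ?_⟩
          push_cast at K2
          simp only [sub_neg_eq_add]
          linear_combination K2
      · refine fin (-(k : ℂ)) (I * (kp k : ℂ)) (k : ℂ) (-(I * (kp k : ℂ))) (by ring) (by simp [hp']) ?_
        rintro z (rfl | rfl)
        · refine ⟨p2', p3, p1, p4', ?_⟩
          push_cast at K1
          simp only [sub_neg_eq_add]
          linear_combination K1
        · refine ⟨q2', q3, q1, q4', ?_⟩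
          push_cast at K2
          simp only [sub_neg_eq_add]
          linear_combination K2
      · refine fin (k : ℂ) (-(I * (kp k : ℂ))) (-(k : ℂ)) (I * (kp k : ℂ)) (by ring) (by simp [hp']) ?_
        rintro z (rfl | rfl)
        · refine ⟨p1, p4', p2', p3, ?_⟩
          push_cast at K1
          simp only [sub_neg_eq_add]
          linear_combination K1
        · refine ⟨q1, q4', q2', q3, ?_⟩
          push_cast at K2
          simp only [sub_neg_eq_add]
          linear_combination K2
      · refine fin (k : ℂ) (I * (kp k : ℂ)) (-(k : ℂ)) (-(I * (kp k : ℂ))) (by ring) (by simp [hp']) ?_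
        rintro z (rfl | rfl)
        · refine ⟨p1, p3, p2', p4', ?_⟩
          push_cast at K1
          simp only [sub_neg_eq_add]
          linear_combination K1
        · refine ⟨q1, q3, q2', q4', ?_⟩
          push_cast at K2
          simp only [sub_neg_eq_add]
          linear_combination K2
      · refine fin (k : ℂ) (-(k : ℂ)) (I * (kp k : ℂ)) (-(I * (kp k : ℂ))) (by ring) (by simp [hp']) ?_
        rintro z (rfl | rfl)
        · refine ⟨p1, p2', p3, p4', ?_⟩
          push_cast at K1
          simp only [sub_neg_eq_add]
          linear_combination K1
        · refine ⟨q1, q2', q3, q4', ?_⟩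
          push_cast at K2
          simp only [sub_neg_eq_add]
          linear_combination K2
  · intro hh
    refine ⟨-1, fun _ => 1 / 4, 1, Polynomial.X - Polynomial.C (1 / (ω : ℂ)), Or.inl rfl,
      fun _ => Or.inl rfl, by norm_num [Fin.sum_univ_four], Polynomial.monic_X_sub_C _,
      Polynomial.natDegree_X_sub_C _, fun z hz => ?_⟩
    have := hsol hh z hz
    simp only [Polynomial.derivative_sub, Polynomial.derivative_X, Polynomial.derivative_C,
      sub_zero, Polynomial.derivative_one, Polynomial.eval_zero, Polynomial.eval_one,
      Polynomial.eval_sub, Polynomial.eval_X, Polynomial.eval_C]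
    linear_combination this
  · intro hh z hz
    have := hsol hh z hz
    have hd : deriv (fun z : ℂ => z - 1 / (ω : ℂ)) = fun _ => 1 := by
      funext y; simp
    rw [hd, deriv_const]
    linear_combination this
end
end

section
/- Let r be the case C > 1 normal-form coefficient with poles z₁ = k, z₂ = −k, z₃ = ik', z₄ = −ik'. There exist e_∞ ∈ {−1, 2}, e₁, e₂, e₃, e₄ ∈ {1/4, 3/4} with d := 1 − (e_∞ + e₁ + e₂ + e₃ + e₄) a non-negative integer, and a monic polynomial P ∈ ℂ[z] of degree d satisfying P'' + 2wP' + (w' + w² − r)P = 0 on ℂ ∖ {z₁,z₂,z₃,z₄}, where w(z) = Σᵢ₌₁⁴ eᵢ/(z−zᵢ), if and only if 2k² − 1 > 0, ξ = −1/(2k²−1) and ω² = 2/(2k²−1). -/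
noncomputable section

open Complex

/-- The coefficient `q(z)` in the case `C > 1`. -/
def qGt (k ω ξ : ℝ) (z : ℂ) : ℂ :=
  (-(ξ : ℂ) + (1 + (ω : ℂ) * z) ^ 2 - (ω : ℂ) ^ 2 * ((k : ℂ) ^ 2 - z ^ 2)) /
    ((ω : ℂ) ^ 2 * ((k : ℂ) ^ 2 - z ^ 2) * (z ^ 2 + (kp k : ℂ) ^ 2))

/-- The normal-form coefficient `r = −q + p'/2 + p²/4` in the case `C > 1`. -/
def rGt (k ω ξ : ℝ) (z : ℂ) : ℂ :=
  -qGt k ω ξ z + deriv (pcoef k) z / 2 + pcoef k z ^ 2 / 4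

/-- the derivative of `p` and its partial fraction decomposition away from the poles -/
lemma pcoef_facts (k : ℝ) (b z : ℂ) (hb : b ^ 2 = (k : ℂ) ^ 2 - 1)
    (hkp : (kp k : ℂ) ^ 2 = - b ^ 2)
    (h1 : z - k ≠ 0) (h2 : z + k ≠ 0) (h3 : z - b ≠ 0) (h4 : z + b ≠ 0) :
    pcoef k z = (1 / 2) * (1 / (z - k) + 1 / (z + k) + 1 / (z - b) + 1 / (z + b)) ∧
    deriv (pcoef k) z = -(1 / 2) * (1 / (z - k) ^ 2 + 1 / (z + k) ^ 2 + 1 / (z - b) ^ 2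
      + 1 / (z + b) ^ 2) := by
  have key : ∀ y : ℂ, y - k ≠ 0 → y + k ≠ 0 → y - b ≠ 0 → y + b ≠ 0 →
      pcoef k y = (1 / 2) * ((y - k)⁻¹ + (y + k)⁻¹ + (y - b)⁻¹ + (y + b)⁻¹) := by
    intro y h1 h2 h3 h4
    have e1 : (k : ℂ) ^ 2 - y ^ 2 = -((y - k) * (y + k)) := by ring
    have e2 : y ^ 2 + (kp k : ℂ) ^ 2 = (y - b) * (y + b) := by rw [hkp]; ring
    have e3 : y * (-1 + 2 * ((k : ℂ) ^ 2 - y ^ 2)) = y * (b ^ 2 + (k : ℂ) ^ 2 - 2 * y ^ 2) := by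
      rw [hb]; ring
    unfold pcoef
    rw [e2, e3, e1]
    field_simp
    ring
  refine ⟨by simpa only [one_div] using key z h1 h2 h3 h4, ?_⟩
  have hev : pcoef k =ᶠ[nhds z]
      fun y => (1 / 2) * ((y - k)⁻¹ + (y + k)⁻¹ + (y - b)⁻¹ + (y + b)⁻¹) := by
    have c1 : ∀ᶠ y in nhds z, y - (k : ℂ) ≠ 0 :=
      ContinuousAt.eventually_ne (by fun_prop) h1
    have c2 : ∀ᶠ y in nhds z, y + (k : ℂ) ≠ 0 :=
      ContinuousAt.eventually_ne (by fun_prop) h2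
    have c3 : ∀ᶠ y in nhds z, y - b ≠ 0 :=
      ContinuousAt.eventually_ne (by fun_prop) h3
    have c4 : ∀ᶠ y in nhds z, y + b ≠ 0 :=
      ContinuousAt.eventually_ne (by fun_prop) h4
    filter_upwards [c1, c2, c3, c4] with y using key y
  rw [hev.deriv_eq]
  have d1 := ((hasDerivAt_id z).sub_const (k : ℂ)).inv h1
  have d2 := ((hasDerivAt_id z).add_const (k : ℂ)).inv h2
  have d3 := ((hasDerivAt_id z).sub_const b).inv h3
  have d4 := ((hasDerivAt_id z).add_const b).inv h4
  have d := (((d1.add d2).add d3).add d4).const_mul (1 / 2 : ℂ)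
  refine (d.deriv).trans ?_
  simp only [id]
  ring

lemma w_deriv (e p : Fin 4 → ℂ) (z : ℂ) (h : ∀ i, z - p i ≠ 0) :
    deriv (fun z => ∑ i, e i / (z - p i)) z = - ∑ i, e i / (z - p i) ^ 2 := by
  have d : HasDerivAt (fun z => ∑ i, e i / (z - p i)) (∑ i, e i * (-1 / (z - p i) ^ 2)) z := by
    refine HasDerivAt.fun_sum fun i _ => ?_
    simp only [div_eq_mul_inv (e i)]
    exact (((hasDerivAt_id z).sub_const (p i)).inv (h i)).const_mul (e i)
  rw [d.deriv, ← Finset.sum_neg_distrib]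
  refine Finset.sum_congr rfl fun i _ => ?_
  ring

/-- reduction of the degree zero case -/
lemma deg_zero_alg (a b c d z N W : ℂ) (hW : W ≠ 0)
    (h1 : z - a ≠ 0) (h2 : z - b ≠ 0) (h3 : z - c ≠ 0) (h4 : z - d ≠ 0)
    (h : -(3 / 4 / (z - a) ^ 2 + 3 / 4 / (z - b) ^ 2 + 1 / 4 / (z - c) ^ 2 + 1 / 4 / (z - d) ^ 2)
      + (3 / 4 / (z - a) + 3 / 4 / (z - b) + 1 / 4 / (z - c) + 1 / 4 / (z - d)) ^ 2
      - (N / (W * ((z - a) * (z - b) * (z - c) * (z - d)))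
        + -(1 / 2) * (1 / (z - a) ^ 2 + 1 / (z - b) ^ 2 + 1 / (z - c) ^ 2 + 1 / (z - d) ^ 2) / 2
        + ((1 / 2) * (1 / (z - a) + 1 / (z - b) + 1 / (z - c) + 1 / (z - d))) ^ 2 / 4) = 0) :
    N = W * ((z - c) * (z - d) + (2 * z - a - b) * (2 * z - c - d) / 4) := by
  have key : -(3 / 4 / (z - a) ^ 2 + 3 / 4 / (z - b) ^ 2 + 1 / 4 / (z - c) ^ 2 + 1 / 4 / (z - d) ^ 2)
      + (3 / 4 / (z - a) + 3 / 4 / (z - b) + 1 / 4 / (z - c) + 1 / 4 / (z - d)) ^ 2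
      - (-(1 / 2) * (1 / (z - a) ^ 2 + 1 / (z - b) ^ 2 + 1 / (z - c) ^ 2 + 1 / (z - d) ^ 2) / 2
        + ((1 / 2) * (1 / (z - a) + 1 / (z - b) + 1 / (z - c) + 1 / (z - d))) ^ 2 / 4)
      = (W * ((z - c) * (z - d) + (2 * z - a - b) * (2 * z - c - d) / 4))
        / (W * ((z - a) * (z - b) * (z - c) * (z - d))) := by
    obtain ⟨A, hA⟩ : ∃ A, A = z - a := ⟨_, rfl⟩
    obtain ⟨B, hB⟩ : ∃ A, A = z - b := ⟨_, rfl⟩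
    obtain ⟨C, hC⟩ : ∃ A, A = z - c := ⟨_, rfl⟩
    obtain ⟨D, hD⟩ : ∃ A, A = z - d := ⟨_, rfl⟩
    have e1 : 2 * z - a - b = A + B := by rw [hA, hB]; ring
    have e2 : 2 * z - c - d = C + D := by rw [hC, hD]; ring
    rw [e1, e2]
    simp only [← hA, ← hB, ← hC, ← hD] at *
    field_simp
    ring
  have hne : W * ((z - a) * (z - b) * (z - c) * (z - d)) ≠ 0 := by simp_all
  have : N / (W * ((z - a) * (z - b) * (z - c) * (z - d)))
    = (W * ((z - c) * (z - d) + (2 * z - a - b) * (2 * z - c - d) / 4))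
        / (W * ((z - a) * (z - b) * (z - c) * (z - d))) := by
    rw [← key]; linear_combination -h
  exact (div_left_inj' hne).1 this

lemma deg_zero_fin (a b c d k ω ξ : ℂ) (hω : ω ≠ 0) (hs : c + d = - (a + b))
    (h : ∀ z : ℂ, (z = 2 ∨ z = -2) → (-ξ + (1 + ω * z) ^ 2 - ω ^ 2 * (k ^ 2 - z ^ 2))
      = ω ^ 2 * ((z - c) * (z - d) + (2 * z - a - b) * (2 * z - c - d) / 4)) :
    ω * (a + b) = 2 := by
  have h1 := h 2 (Or.inl rfl)
  have h2 := h (-2) (Or.inr rfl)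
  have hd : d = -(a + b) - c := by linear_combination hs
  subst hd
  apply mul_left_cancel₀ hω
  linear_combination (h2 - h1) / 4

lemma sum_bad (k t ω : ℝ) (s1 s2 : ℂ) (ht : 0 < t) (hs2 : s2 = 1 ∨ s2 = -1)
    (hs1 : s1 = 1 ∨ s1 = -1)
    (h : (ω : ℂ) * (s1 * k + s2 * (I * t)) = 2) (hω : 0 < ω) : False := by
  have := congrArg Complex.im h
  rcases hs1 with rfl | rfl <;> rcases hs2 with rfl | rfl <;> simp at this <;>
    rcases this with h | h <;> linarith

theorem kovacic_case_one_Cgt (k ω ξ : ℝ)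
    (hk0 : 0 < k) (hk1 : k < 1) (hω : 0 < ω) :
    (∃ (einf : ℂ) (e : Fin 4 → ℂ) (d : ℕ) (P : Polynomial ℂ),
        (einf = -1 ∨ einf = 2) ∧ (∀ i, e i = 1 / 4 ∨ e i = 3 / 4) ∧
        (d : ℂ) = 1 - (einf + ∑ i, e i) ∧
        P.Monic ∧ P.natDegree = d ∧
        (∀ z : ℂ, (∀ i, z ≠ poles k i) →
          (P.derivative.derivative.eval z)
            + 2 * (∑ i, e i / (z - poles k i)) * (P.derivative.eval z)
            + (deriv (fun z => ∑ i, e i / (z - poles k i)) z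
                + (∑ i, e i / (z - poles k i)) ^ 2 - rGt k ω ξ z) * P.eval z
            = 0))
      ↔ (0 < 2 * k ^ 2 - 1 ∧ ξ = -1 / (2 * k ^ 2 - 1) ∧
          ω ^ 2 = 2 / (2 * k ^ 2 - 1)) := by
  have hpos : 0 < 1 - k ^ 2 := by nlinarith
  have ht : 0 < kp k := Real.sqrt_pos.2 hpos
  have ht2 : kp k ^ 2 = 1 - k ^ 2 := Real.sq_sqrt hpos.le
  have ht2c : (kp k : ℂ) ^ 2 = 1 - (k : ℂ) ^ 2 := by exact_mod_cast ht2
  have hωc : (ω : ℂ) ≠ 0 := by exact_mod_cast hω.ne'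
  obtain ⟨b, hbdef⟩ : ∃ b, b = I * (kp k : ℂ) := ⟨_, rfl⟩
  have hb : b ^ 2 = (k : ℂ) ^ 2 - 1 := by
    rw [hbdef, mul_pow, I_sq, ht2c]; ring
  have hkp : (kp k : ℂ) ^ 2 = - b ^ 2 := by rw [hb, ht2c]; ring
  have hpol : poles k = ![(k : ℂ), -(k : ℂ), b, -b] := by rw [hbdef]; rfl
  -- explicit form of r
  have hr : ∀ z : ℂ, z - k ≠ 0 → z + k ≠ 0 → z - b ≠ 0 → z + b ≠ 0 →
      rGt k ω ξ z =
        (-(ξ : ℂ) + (1 + (ω : ℂ) * z) ^ 2 - (ω : ℂ) ^ 2 * ((k : ℂ) ^ 2 - z ^ 2)) /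
          ((ω : ℂ) ^ 2 * ((z - k) * (z + k) * (z - b) * (z + b)))
        + -(1 / 2) * (1 / (z - k) ^ 2 + 1 / (z + k) ^ 2 + 1 / (z - b) ^ 2
            + 1 / (z + b) ^ 2) / 2
        + ((1 / 2) * (1 / (z - k) + 1 / (z + k) + 1 / (z - b) + 1 / (z + b))) ^ 2 / 4 := by
    intro z h1 h2 h3 h4
    obtain ⟨f1, f2⟩ := pcoef_facts k b z hb hkp h1 h2 h3 h4
    have e : (ω : ℂ) ^ 2 * ((k : ℂ) ^ 2 - z ^ 2) * (z ^ 2 + (kp k : ℂ) ^ 2)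
      = -((ω : ℂ) ^ 2 * ((z - k) * (z + k) * (z - b) * (z + b))) := by rw [hkp]; ring
    unfold rGt qGt
    rw [f1, f2, e, div_neg, neg_neg]
  have hnp : ∀ z : ℂ, z - k ≠ 0 → z + k ≠ 0 → z - b ≠ 0 → z + b ≠ 0 →
      ∀ i, z - poles k i ≠ 0 := by
    intro z h1 h2 h3 h4 i
    rw [hpol]
    fin_cases i <;> simp <;> assumption
  -- sample points
  have hsamp : ∀ x : ℝ, 1 < |x| →
      (x : ℂ) - k ≠ 0 ∧ (x : ℂ) + k ≠ 0 ∧ (x : ℂ) - b ≠ 0 ∧ (x : ℂ) + b ≠ 0 := by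
    intro x hx
    have hx2 : 1 < x ^ 2 := by
      rw [← sq_abs]; nlinarith
    have A : (x : ℂ) ^ 2 - (k : ℂ) ^ 2 ≠ 0 := by
      intro h
      have : x ^ 2 - k ^ 2 = 0 := by exact_mod_cast h
      nlinarith
    have B : (x : ℂ) ^ 2 - b ^ 2 ≠ 0 := by
      rw [hb]
      intro h
      have : x ^ 2 - (k ^ 2 - 1) = 0 := by exact_mod_cast h
      nlinarith
    refine ⟨fun h => A ?_, fun h => A ?_, fun h => B ?_, fun h => B ?_⟩
    · linear_combination ((x : ℂ) + k) * h
    · linear_combination ((x : ℂ) - k) * h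
    · linear_combination ((x : ℂ) + b) * h
    · linear_combination ((x : ℂ) - b) * h
  -- degree one identity
  have hdeg1 : ∀ z c : ℂ, z - k ≠ 0 → z + k ≠ 0 → z - b ≠ 0 → z + b ≠ 0 →
      (2 * (1 / 4 / (z - k) + 1 / 4 / (z + k) + 1 / 4 / (z - b) + 1 / 4 / (z + b))
      + (-(1 / 4 / (z - k) ^ 2 + 1 / 4 / (z + k) ^ 2 + 1 / 4 / (z - b) ^ 2 + 1 / 4 / (z + b) ^ 2)
        + (1 / 4 / (z - k) + 1 / 4 / (z + k) + 1 / 4 / (z - b) + 1 / 4 / (z + b)) ^ 2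
        - rGt k ω ξ z) * (z + c)) =
      -((ω : ℂ) ^ 2 * z * (2 * (k : ℂ) ^ 2 - 1 - 2 * z ^ 2)
        + (-(ξ : ℂ) + (1 + (ω : ℂ) * z) ^ 2 - (ω : ℂ) ^ 2 * ((k : ℂ) ^ 2 - z ^ 2)) * (z + c))
        / ((ω : ℂ) ^ 2 * ((z - k) * (z + k) * (z - b) * (z + b))) := by
    intro z c h1 h2 h3 h4
    rw [hr z h1 h2 h3 h4]
    have e : 2 * (k : ℂ) ^ 2 - 1 = (k : ℂ) ^ 2 + b ^ 2 := by rw [hb]; ring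
    rw [e]
    generalize -(ξ : ℂ) + (1 + (ω : ℂ) * z) ^ 2 - (ω : ℂ) ^ 2 * ((k : ℂ) ^ 2 - z ^ 2) = N
    have e2 : 2 * (1 / 4 / (z - k) + 1 / 4 / (z + k) + 1 / 4 / (z - b) + 1 / 4 / (z + b))
      = -((ω : ℂ) ^ 2 * z * ((k : ℂ) ^ 2 + b ^ 2 - 2 * z ^ 2))
        / ((ω : ℂ) ^ 2 * ((z - k) * (z + k) * (z - b) * (z + b))) := by
      field_simp
      ring
    rw [e2]
    ring
  constructor
  · rintro ⟨einf, e, d, P, hinf, he, hd, hP, hdeg, hall⟩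
    have hall' : ∀ z : ℂ, z - k ≠ 0 → z + k ≠ 0 → z - b ≠ 0 → z + b ≠ 0 →
      (P.derivative.derivative.eval z)
            + 2 * (e 0 / (z - k) + e 1 / (z + k) + e 2 / (z - b) + e 3 / (z + b))
              * (P.derivative.eval z)
            + (-(e 0 / (z - k) ^ 2 + e 1 / (z + k) ^ 2 + e 2 / (z - b) ^ 2 + e 3 / (z + b) ^ 2)
                + (e 0 / (z - k) + e 1 / (z + k) + e 2 / (z - b) + e 3 / (z + b)) ^ 2
                - rGt k ω ξ z) * P.eval z
            = 0 := by
      intro z h1 h2 h3 h4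
      have h := hnp z h1 h2 h3 h4
      have := hall z (fun i => sub_ne_zero.1 (h i))
      rw [w_deriv e _ z h, hpol] at this
      simpa [Fin.sum_univ_four] using this
    rw [Fin.sum_univ_four] at hd
    have H0 : d = 0 → ∀ x : ℝ, 1 < |x| → 
        (-(e 0 / ((x : ℂ) - k) ^ 2 + e 1 / ((x : ℂ) + k) ^ 2 + e 2 / ((x : ℂ) - b) ^ 2
          + e 3 / ((x : ℂ) + b) ^ 2)
                + (e 0 / ((x : ℂ) - k) + e 1 / ((x : ℂ) + k) + e 2 / ((x : ℂ) - b)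
                  + e 3 / ((x : ℂ) + b)) ^ 2
                - rGt k ω ξ x) = 0 := by
      intro h0 x hx
      obtain ⟨h1, h2, h3, h4⟩ := hsamp x hx
      have hP1 : P = 1 := hP.natDegree_eq_zero.1 (hdeg.trans h0)
      have := hall' x h1 h2 h3 h4
      simpa [hP1] using this
    -- elimination of degree zero
    have K0 : ∀ p q r s : ℂ, r + s = -(p + q) →
        (∀ z : ℂ, (z - p) * (z - q) * (z - r) * (z - s) = (z - k) * (z + k) * (z - b) * (z + b)) →
        (∀ z : ℂ, z - k ≠ 0 → z + k ≠ 0 → z - b ≠ 0 → z + b ≠ 0 → 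
          z - p ≠ 0 ∧ z - q ≠ 0 ∧ z - r ≠ 0 ∧ z - s ≠ 0) →
        (∀ z : ℂ, 1 / (z - p) + 1 / (z - q) + 1 / (z - r) + 1 / (z - s)
          = 1 / (z - k) + 1 / (z + k) + 1 / (z - b) + 1 / (z + b)) →
        (∀ z : ℂ, 1 / (z - p) ^ 2 + 1 / (z - q) ^ 2 + 1 / (z - r) ^ 2 + 1 / (z - s) ^ 2
          = 1 / (z - k) ^ 2 + 1 / (z + k) ^ 2 + 1 / (z - b) ^ 2 + 1 / (z + b) ^ 2) →
        (∀ x : ℝ, 1 < |x| → 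
          -(3 / 4 / ((x : ℂ) - p) ^ 2 + 3 / 4 / ((x : ℂ) - q) ^ 2 + 1 / 4 / ((x : ℂ) - r) ^ 2
              + 1 / 4 / ((x : ℂ) - s) ^ 2)
            + (3 / 4 / ((x : ℂ) - p) + 3 / 4 / ((x : ℂ) - q) + 1 / 4 / ((x : ℂ) - r)
              + 1 / 4 / ((x : ℂ) - s)) ^ 2
            - rGt k ω ξ x = 0) → ω * (p + q) = 2 := by
      intro p q r s hsum hprod hne hs1 hs2 hx
      refine deg_zero_fin p q r s k ω ξ hωc hsum ?_
      have : ∀ x : ℝ, 1 < |x| → 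
        (-(ξ : ℂ) + (1 + (ω : ℂ) * x) ^ 2 - (ω : ℂ) ^ 2 * ((k : ℂ) ^ 2 - (x : ℂ) ^ 2))
        = (ω : ℂ) ^ 2 * (((x : ℂ) - r) * (x - s) + (2 * (x : ℂ) - p - q) * (2 * x - r - s) / 4) := by
        intro x hx1
        obtain ⟨h1, h2, h3, h4⟩ := hsamp x hx1
        obtain ⟨g1, g2, g3, g4⟩ := hne x h1 h2 h3 h4
        refine deg_zero_alg p q r s x _ _ (pow_ne_zero 2 hωc) g1 g2 g3 g4 ?_
        rw [hs1, hs2, hprod, ← hr x h1 h2 h3 h4]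
        exact hx x hx1
      rintro z (rfl | rfl)
      · exact_mod_cast this 2 (by norm_num)
      · have := this (-2) (by norm_num)
        push_cast at this
        exact this
    have K1 : ∀ p q r s : ℂ, r + s = -(p + q) →
        (∀ z : ℂ, (z - p) * (z - q) * (z - r) * (z - s) = (z - k) * (z + k) * (z - b) * (z + b)) →
        (∀ z : ℂ, 1 / (z - p) + 1 / (z - q) + 1 / (z - r) + 1 / (z - s)
          = 1 / (z - k) + 1 / (z + k) + 1 / (z - b) + 1 / (z + b)) →
        (∀ z : ℂ, 1 / (z - p) ^ 2 + 1 / (z - q) ^ 2 + 1 / (z - r) ^ 2 + 1 / (z - s) ^ 2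
          = 1 / (z - k) ^ 2 + 1 / (z + k) ^ 2 + 1 / (z - b) ^ 2 + 1 / (z + b) ^ 2) →
        (∀ x : ℝ, 1 < |x| → 
          -(3 / 4 / ((x : ℂ) - p) ^ 2 + 3 / 4 / ((x : ℂ) - q) ^ 2 + 1 / 4 / ((x : ℂ) - r) ^ 2
              + 1 / 4 / ((x : ℂ) - s) ^ 2)
            + (3 / 4 / ((x : ℂ) - p) + 3 / 4 / ((x : ℂ) - q) + 1 / 4 / ((x : ℂ) - r)
              + 1 / 4 / ((x : ℂ) - s)) ^ 2
            - rGt k ω ξ x = 0) → ω * (p + q) = 2 := by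
      intro p q r s hsum hprod
      refine K0 p q r s hsum hprod ?_
      intro z h1 h2 h3 h4
      have : (z - p) * (z - q) * (z - r) * (z - s) ≠ 0 := by
        rw [hprod]
        exact mul_ne_zero (mul_ne_zero (mul_ne_zero h1 h2) h3) h4
      simp only [mul_ne_zero_iff] at this
      tauto
    have he' : ∀ i, ∃ m : ℕ, (m = 0 ∧ e i = 1 / 4) ∨ (m = 1 ∧ e i = 3 / 4) := by
      intro i
      rcases he i with h | h
      · exact ⟨0, Or.inl ⟨rfl, h⟩⟩
      · exact ⟨1, Or.inr ⟨rfl, h⟩⟩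
    choose m hm using he'
    have hE : ∀ i, e i = 1 / 4 + (m i : ℂ) / 2 := by
      intro i
      rcases hm i with ⟨h, h'⟩ | ⟨h, h'⟩ <;> rw [h, h'] <;> norm_num
    rw [hE 0, hE 1, hE 2, hE 3] at hd
    rcases hinf with rfl | rfl
    swap
    · exfalso
      have h : 2 * (d : ℂ) + (m 0 + m 1 + m 2 + m 3 : ℂ) + 4 = 0 := by
        linear_combination 2 * hd
      have h' : 2 * d + (m 0 + m 1 + m 2 + m 3) + 4 = 0 := by exact_mod_cast h
      omega
    have hdN : 2 * d + (m 0 + m 1 + m 2 + m 3) = 2 := by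
      have h : 2 * (d : ℂ) + (m 0 + m 1 + m 2 + m 3 : ℂ) = 2 := by
        linear_combination 2 * hd
      exact_mod_cast h
    have hall4 : (e 0 = 1 / 4 ∧ e 1 = 1 / 4 ∧ e 2 = 1 / 4 ∧ e 3 = 1 / 4) ∧ d = 1 := by
      rcases hm 0 with ⟨m0, h0⟩ | ⟨m0, h0⟩ <;> rcases hm 1 with ⟨m1, h1⟩ | ⟨m1, h1⟩ <;>
        rcases hm 2 with ⟨m2, h2⟩ | ⟨m2, h2⟩ <;> rcases hm 3 with ⟨m3, h3⟩ | ⟨m3, h3⟩ <;>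
        rw [m0, m1, m2, m3] at hdN
      all_goals
        first
        | (exfalso; omega)
        | (refine ⟨⟨h0, h1, h2, h3⟩, ?_⟩; omega)
        | skip
      all_goals
        exfalso
        have hd0 : d = 0 := by omega
        have G := H0 hd0
        rw [h0, h1, h2, h3] at G
      · -- b, -b
        have := K1 b (-b) k (-k) (by ring) (by intro z; ring) (by intro z; ring)
          (by intro z; ring) (by intro x hx; rw [← G x hx]; ring)
        simp at this
      · -- -k, -b
        have := K1 (-k) (-b) k b (by ring) (by intro z; ring) (by intro z; ring)
          (by intro z; ring) (by intro x hx; rw [← G x hx]; ring)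
        rw [hbdef] at this
        exact sum_bad k (kp k) ω (-1) (-1) ht (by simp) (by simp)
          (by rw [← this]; ring) hω
      · -- -k, b
        have := K1 (-k) b k (-b) (by ring) (by intro z; ring) (by intro z; ring)
          (by intro z; ring) (by intro x hx; rw [← G x hx]; ring)
        rw [hbdef] at this
        exact sum_bad k (kp k) ω (-1) 1 ht (by simp) (by simp)
          (by rw [← this]; ring) hω
      · -- k, -b
        have := K1 k (-b) (-k) b (by ring) (by intro z; ring) (by intro z; ring)
          (by intro z; ring) (by intro x hx; rw [← G x hx]; ring)
        rw [hbdef] at this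
        exact sum_bad k (kp k) ω 1 (-1) ht (by simp) (by simp)
          (by rw [← this]; ring) hω
      · -- k, b
        have := K1 k b (-k) (-b) (by ring) (by intro z; ring) (by intro z; ring)
          (by intro z; ring) (by intro x hx; rw [← G x hx]; ring)
        rw [hbdef] at this
        exact sum_bad k (kp k) ω 1 1 ht (by simp) (by simp)
          (by rw [← this]; ring) hω
      · -- k, -k
        have := K1 k (-k) b (-b) (by ring) (by intro z; ring) (by intro z; ring)
          (by intro z; ring) (by intro x hx; rw [← G x hx]; ring)
        simp at this
    obtain ⟨⟨h0, h1, h2, h3⟩, hd1⟩ := hall4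
    obtain ⟨c, hPc⟩ : ∃ c : ℂ, P = Polynomial.X + Polynomial.C c :=
      ⟨_, hP.eq_X_add_C (hdeg.trans hd1)⟩
    have E : ∀ x : ℝ, 1 < |x| →
        ((ω : ℂ) ^ 2 * x * (2 * (k : ℂ) ^ 2 - 1 - 2 * (x : ℂ) ^ 2)
        + (-(ξ : ℂ) + (1 + (ω : ℂ) * x) ^ 2 - (ω : ℂ) ^ 2 * ((k : ℂ) ^ 2 - (x : ℂ) ^ 2)) * (x + c))
         = 0 := by
      intro x hx
      obtain ⟨g1, g2, g3, g4⟩ := hsamp x hx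
      have := hall' x g1 g2 g3 g4
      rw [h0, h1, h2, h3, hPc] at this
      simp only [Polynomial.derivative_add, Polynomial.derivative_X, Polynomial.derivative_C,
        Polynomial.eval_add, Polynomial.eval_X, Polynomial.eval_C, add_zero,
        Polynomial.derivative_one, Polynomial.eval_zero, Polynomial.eval_one, mul_one,
        zero_add] at this
      rw [hdeg1 x c g1 g2 g3 g4] at this
      have hne : ((ω : ℂ) ^ 2 * ((x - k) * (x + k) * (x - b) * (x + b))) ≠ 0 :=
        mul_ne_zero (pow_ne_zero 2 hωc) (mul_ne_zero (mul_ne_zero (mul_ne_zero g1 g2) g3) g4)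
      rcases div_eq_zero_iff.1 this with h | h
      · exact neg_eq_zero.1 h
      · exact absurd h hne
    have E1 := E 2 (by norm_num)
    have E2 := E (-2) (by norm_num)
    have E3 := E 3 (by norm_num)
    push_cast at E1 E2 E3
    have F1 : (ω : ℂ) * c = -1 := by
      have : (ω : ℂ) * (ω * c + 1) = 0 := by
        linear_combination E3 / 10 - E1 / 8 + E2 / 40
      have := (mul_eq_zero.1 this).resolve_left hωc
      linear_combination this
    have F2 : (1 : ℂ) - ξ - ω ^ 2 * k ^ 2 = 0 := by
      have : c * (1 - ξ - ω ^ 2 * (k : ℂ) ^ 2) = 0 := by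
        linear_combination (E1 + E2) / 2 - 8 * ω * F1
      have hc : c ≠ 0 := by rintro rfl; simp at F1
      exact (mul_eq_zero.1 this).resolve_left hc
    have F3 : (ω : ℂ) ^ 2 * (2 * k ^ 2 - 1) = 2 := by
      linear_combination (E1 - E2) / 4 - F2 - 2 * F1
    have R2 : 1 - ξ - ω ^ 2 * k ^ 2 = 0 := by exact_mod_cast F2
    have R3 : ω ^ 2 * (2 * k ^ 2 - 1) = 2 := by exact_mod_cast F3
    have hp : 0 < 2 * k ^ 2 - 1 := by
      by_contra hcon
      nlinarith [sq_nonneg ω, mul_nonneg (sq_nonneg ω) (sub_nonneg.2 (not_lt.1 hcon))]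
    refine ⟨hp, ?_, ?_⟩
    · rw [eq_div_iff hp.ne']
      linear_combination -(2 * k ^ 2 - 1) * R2 - k ^ 2 * R3
    · rw [eq_div_iff hp.ne', R3]
  · rintro ⟨hp, hξ, hω2⟩
    have R3 : ω ^ 2 * (2 * k ^ 2 - 1) = 2 := by rw [hω2]; field_simp
    have R2 : 1 - ξ - ω ^ 2 * k ^ 2 = 0 := by
      rw [hξ, hω2]; field_simp; ring
    have F2 : (1 : ℂ) - ξ - ω ^ 2 * k ^ 2 = 0 := by exact_mod_cast R2
    have F3 : (ω : ℂ) ^ 2 * (2 * k ^ 2 - 1) = 2 := by exact_mod_cast R3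
    have F1 : (ω : ℂ) * (-(1 / ω)) = -1 := by field_simp
    refine ⟨-1, fun _ => 1 / 4, 1, Polynomial.X + Polynomial.C (-(1 / (ω : ℂ))), Or.inl rfl,
      fun _ => Or.inl rfl, ?_, Polynomial.monic_X_add_C _, Polynomial.natDegree_X_add_C _, ?_⟩
    · rw [Fin.sum_univ_four]; norm_num
    · generalize -(1 / (ω : ℂ)) = c at F1
      intro z hz
      have hz' : ∀ i, z - poles k i ≠ 0 := fun i => sub_ne_zero.2 (hz i)
      have g1 : z - k ≠ 0 := by simpa [hpol] using hz' 0
      have g2 : z + k ≠ 0 := by simpa [hpol] using hz' 1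
      have g3 : z - b ≠ 0 := by simpa [hpol] using hz' 2
      have g4 : z + b ≠ 0 := by simpa [hpol] using hz' 3
      rw [w_deriv _ _ z hz', hpol]
      have key := hdeg1 z c g1 g2 g3 g4
      have hN : ((ω : ℂ) ^ 2 * z * (2 * (k : ℂ) ^ 2 - 1 - 2 * z ^ 2)
        + (-(ξ : ℂ) + (1 + (ω : ℂ) * z) ^ 2 - (ω : ℂ) ^ 2 * ((k : ℂ) ^ 2 - z ^ 2)) * (z + c))
        = 0 := by
        linear_combination z * F3 + (z + c) * F2 + (2 * ω * z ^ 2 + 2 * z) * F1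
      rw [hN, neg_zero, zero_div] at key
      rw [← key]
      simp only [Polynomial.derivative_add, Polynomial.derivative_X, Polynomial.derivative_C,
        Polynomial.eval_add, Polynomial.eval_X, Polynomial.eval_C, add_zero,
        Polynomial.derivative_one, Polynomial.eval_zero, Polynomial.eval_one, mul_one,
        zero_add, Fin.sum_univ_four, Matrix.cons_val, sub_neg_eq_add]
end
end

section
/- Let r be the case C < 1 normal-form coefficient and assume ξ = ω²/2. Set θ(z) = (1/2)Σᵢ₌₁⁴ 1/(z−zᵢ) with z₁ = k, z₂ = −k, z₃ = ik', z₄ = −ik', and let P(z) = z² − (2/ω)z + ((1−2k²)ω² + 4)/(2ω²). Then P satisfies the third-order equation of the second case of the Kovacic algorithm: P''' + 3θP'' + (3θ² + 3θ' − 4r)P' + (θ'' + 3θθ' + θ³ − 4rθ − 2r')P = 0 for all z ∈ ℂ ∖ {z₁,z₂,z₃,z₄}. -/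
noncomputable section

open Complex

/-- `θ(z) = (1/2) Σᵢ 1/(z − zᵢ)`. -/
def theta (k : ℝ) (z : ℂ) : ℂ := (1 / 2) * ∑ i, 1 / (z - poles k i)

/-- The polynomial `P(z) = z² − (2/ω)z + ((1−2k²)ω² + 4)/(2ω²)`. -/
def Ppoly (k ω : ℝ) (z : ℂ) : ℂ :=
  z ^ 2 - (2 / (ω : ℂ)) * z + ((1 - 2 * (k : ℂ) ^ 2) * (ω : ℂ) ^ 2 + 4)
    / (2 * (ω : ℂ) ^ 2)

lemma Dden_ne (k : ℝ) (z : ℂ) (hz : ∀ i, z ≠ poles k i) : 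
    (k : ℂ) ^ 2 - z ^ 2 ≠ 0 ∧ z ^ 2 + (kp k : ℂ) ^ 2 ≠ 0 := by
  have h0 := sub_ne_zero.2 (hz 0)
  have h1 := sub_ne_zero.2 (hz 1)
  have h2 := sub_ne_zero.2 (hz 2)
  have h3 := sub_ne_zero.2 (hz 3)
  simp only [poles, Matrix.cons_val] at h0 h1 h2 h3
  constructor
  · have : (k : ℂ) ^ 2 - z ^ 2 = -((z - k) * (z - -k)) := by ring
    rw [this]
    exact neg_ne_zero.2 (mul_ne_zero h0 h1)
  · have : z ^ 2 + (kp k : ℂ) ^ 2 = (z - I * kp k) * (z - -(I * kp k)) := by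
      linear_combination ((kp k : ℂ) ^ 2) * I_sq
    rw [this]
    exact mul_ne_zero h2 h3

lemma theta_eq (k : ℝ) (hk0 : 0 < k) (hk1 : k < 1) (z : ℂ) (hz : ∀ i, z ≠ poles k i) :
    theta k z = pcoef k z := by
  obtain ⟨ha, hb⟩ := Dden_ne k z hz
  have hkp := kp_sq k hk0 hk1
  have h0 := sub_ne_zero.2 (hz 0)
  have h1 := sub_ne_zero.2 (hz 1)
  have h2 := sub_ne_zero.2 (hz 2)
  have h3 := sub_ne_zero.2 (hz 3)
  simp only [poles, Matrix.cons_val] at h0 h1 h2 h3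
  have e1 : 1 / (z - k) + 1 / (z - -(k : ℂ)) = -(2 * z) / ((k : ℂ) ^ 2 - z ^ 2) := by
    rw [div_add_div _ _ h0 h1, div_eq_div_iff (mul_ne_zero h0 h1) ha]
    ring
  have e2 : 1 / (z - I * kp k) + 1 / (z - -(I * kp k)) = (2 * z) / (z ^ 2 + (kp k : ℂ) ^ 2) := by
    rw [div_add_div _ _ h2 h3, div_eq_div_iff (mul_ne_zero h2 h3) hb]
    linear_combination (2 * z * (kp k : ℂ) ^ 2) * I_sq
  have e3 : theta k z = (1 / 2) * ((1 / (z - k) + 1 / (z - -(k : ℂ))) +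
      (1 / (z - I * kp k) + 1 / (z - -(I * kp k)))) := by
    simp only [theta, poles, Fin.sum_univ_four, Matrix.cons_val]
    ring
  rw [e3, e1, e2, pcoef, div_add_div _ _ ha hb, ← mul_div_assoc,
    div_eq_div_iff (mul_ne_zero ha hb) (mul_ne_zero ha hb)]
  linear_combination (-z * ((k : ℂ) ^ 2 - z ^ 2) * (z ^ 2 + (kp k : ℂ) ^ 2)) * hkp

/-- case `C < 1`, `ξ = ω²/2`: the polynomial `P` satisfies the
third-order equation of the second case of the Kovacic algorithm
`P''' + 3θP'' + (3θ² + 3θ' − 4r)P' + (θ'' + 3θθ' + θ³ − 4rθ − 2r')P = 0`. -/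
theorem kovacic_case_two_Clt (k ω ξ : ℝ)
    (hk0 : 0 < k) (hk1 : k < 1) (hω : 0 < ω) (hξ : ξ = ω ^ 2 / 2) :
    ∀ z : ℂ, (∀ i, z ≠ poles k i) →
      deriv (deriv (deriv (Ppoly k ω))) z
        + 3 * theta k z * deriv (deriv (Ppoly k ω)) z
        + (3 * theta k z ^ 2 + 3 * deriv (theta k) z - 4 * rLt k ω ξ z)
          * deriv (Ppoly k ω) z
        + (deriv (deriv (theta k)) z + 3 * theta k z * deriv (theta k) z
            + theta k z ^ 3 - 4 * rLt k ω ξ z * theta k z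
            - 2 * deriv (rLt k ω ξ) z) * Ppoly k ω z
        = 0 := by
  intro z hz
  obtain ⟨ha, hb⟩ := Dden_ne k z hz
  have hkp := kp_sq k hk0 hk1
  have hw : (ω : ℂ) ≠ 0 := by exact_mod_cast hω.ne'
  have hξ' : (ξ : ℂ) = (ω : ℂ) ^ 2 / 2 := by rw [hξ]; push_cast; ring
  have hev : theta k =ᶠ[nhds z] pcoef k := by
    have : ∀ᶠ w in nhds z, ∀ i, w ≠ poles k i :=
      Filter.eventually_all.2 fun i => isOpen_ne.mem_nhds (hz i)
    filter_upwards [this] with w hw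
    exact theta_eq k hk0 hk1 w hw
  rw [hev.deriv.deriv_eq, hev.deriv_eq, hev.eq_of_nhds]
  -- derivatives of P
  have hP1 : deriv (Ppoly k ω) = fun z => 2 * z - 2 / (ω : ℂ) := by
    funext w
    have h : HasDerivAt (Ppoly k ω) _ w :=
      (((hasDerivAt_id w).pow 2).sub ((hasDerivAt_id w).const_mul (2 / (ω : ℂ)))).add_const
        (((1 - 2 * (k : ℂ) ^ 2) * (ω : ℂ) ^ 2 + 4) / (2 * (ω : ℂ) ^ 2))
    rw [h.deriv]
    simp
  have hP2 : deriv (deriv (Ppoly k ω)) = fun _ => 2 := by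
    rw [hP1]
    funext w
    have h : HasDerivAt (fun z : ℂ => 2 * z - 2 / (ω : ℂ)) _ w :=
      ((hasDerivAt_id w).const_mul 2).sub_const _
    rw [h.deriv]
    simp
  have hP3 : deriv (deriv (deriv (Ppoly k ω))) z = 0 := by
    rw [hP2]; simp
  rw [hP3, hP2, hP1]
  -- derivatives of the coefficients
  have dA : HasDerivAt (fun w : ℂ => (k : ℂ) ^ 2 - w ^ 2) (-(2 * z)) z := by
    simpa using ((hasDerivAt_id z).pow 2).const_sub ((k : ℂ) ^ 2)
  have dB : HasDerivAt (fun w : ℂ => w ^ 2 + (kp k : ℂ) ^ 2) (2 * z) z := by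
    simpa using ((hasDerivAt_id z).pow 2).add_const ((kp k : ℂ) ^ 2)
  have dp : HasDerivAt (pcoef k) _ z :=
    ((hasDerivAt_id z).mul ((dA.const_mul 2).const_add (-1))).div (dA.mul dB) (mul_ne_zero ha hb)
  have dL : HasDerivAt (fun w : ℂ => 1 + (ω : ℂ) * w) (ω : ℂ) z := by
    simpa using ((hasDerivAt_id z).const_mul (ω : ℂ)).const_add 1
  have dq : HasDerivAt (qLt k ω ξ) _ z :=
    (((dL.pow 2).const_add (-(ξ : ℂ))).add (dB.const_mul ((ω : ℂ) ^ 2))).div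
      ((dA.const_mul ((ω : ℂ) ^ 2)).mul dB) (mul_ne_zero (mul_ne_zero (pow_ne_zero 2 hw) ha) hb)
  have han : AnalyticAt ℂ (pcoef k) z := by
    unfold pcoef
    have h1 : AnalyticAt ℂ (fun w : ℂ => w * (-1 + 2 * ((k : ℂ) ^ 2 - w ^ 2))) z := by fun_prop
    have h2 : AnalyticAt ℂ (fun w : ℂ => ((k : ℂ) ^ 2 - w ^ 2) * (w ^ 2 + (kp k : ℂ) ^ 2)) z := by
      fun_prop
    exact h1.div h2 (mul_ne_zero ha hb)
  have dpp := han.deriv.differentiableAt.hasDerivAt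
  have dr : HasDerivAt (rLt k ω ξ) _ z :=
    (dq.neg.add (dpp.div_const 2)).add ((dp.pow 2).div_const 4)
  rw [dr.deriv]
  simp only [rLt, dp.deriv]
  generalize deriv (deriv (pcoef k)) z = p2
  simp only [pcoef, qLt, Ppoly, hξ', id, Pi.mul_apply, Pi.pow_apply, Pi.add_apply]
  have hD : (k : ℂ) ^ 2 - z ^ 2 = 1 - (z ^ 2 + (kp k : ℂ) ^ 2) := by rw [hkp]; ring
  rw [hD] at ha
  simp only [hD]
  have hk2 : (k : ℂ) ^ 2 = 1 + z ^ 2 - (z ^ 2 + (kp k : ℂ) ^ 2) := by rw [hkp]; ring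
  rw [hk2]
  clear dr dq dp dA dB dpp hD hk2 hkp
  generalize z ^ 2 + (kp k : ℂ) ^ 2 = b at *
  generalize (ω : ℂ) = w at *
  norm_num only [pow_one, Nat.cast_ofNat]
  field_simp
  ring
end
end
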